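/- arXiv:1304.4354 — 6 statements merged into one kernel-verified Lean document; each statement's English description precedes it below -/
import Mathlib

section
/- Let r_0, r_1, ..., r_d be the orthogonal polynomial sequence for the discrete scalar product on a mesh of d+1 real points, normalized so that ‖r_i‖² = r_i(λ_0). Then the highest-degree polynomial satisfies r_d(λ_0) = (1/w_0)·(Σ_{i=0}^d (w_0 π_0²)/(w_i π_i²))^{-1}, where π_i = Π_{j≠i} |λ_i − λ_j| for i = 0,...,d. -/
open Polynomial Finset

/-- The discrete scalar product `⟨f,g⟩ = ∑_{i∈s} w i · f(λ i) · g(λ i)` on a mesh. -/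
def discInner (s : Finset ℕ) (lam w : ℕ → ℝ) (f g : Polynomial ℝ) : ℝ :=
  ∑ i ∈ s, w i * f.eval (lam i) * g.eval (lam i)

/-- `π_i = ∏_{j ≠ i} |λ_i − λ_j|`, the product over the mesh `λ_0,…,λ_d`. -/
def meshPi (d : ℕ) (lam : ℕ → ℝ) (i : ℕ) : ℝ :=
  ∏ j ∈ (Finset.range (d + 1)).erase i, |lam i - lam j|

/-!
Let `f` be orthogonal to every polynomial of degree less than `d`. The monic polynomials
`∏_{j ≠ i} (X - λ_j)` all have degree `d`, so any two of them have the same scalar product with `f`.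
Since such a polynomial vanishes at all the nodes but `λ_i`, this product is
`w_i f(λ_i) ∏_{j ≠ i} (λ_i - λ_j)`, which is therefore independent of `i`. Thus `f(λ_0)` determines
all the values of `f` on the mesh, hence `⟨f, f⟩` too. It is nonzero, as otherwise `f` would vanish
at `d + 1` points, so equating `⟨f, f⟩` with it gives the formula when `deg f = d`.
-/

theorem span_image_Iio_eq_degreeLT {R : Type*} [Ring R] {r : ℕ → R[X]} {n : ℕ}
    (hdeg : ∀ i < n, (r i).degree = i) (hunit : ∀ i < n, IsUnit (r i).leadingCoeff) :
    Submodule.span R (r '' Set.Iio n) = degreeLT R n := by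
  nontriviality R using Subsingleton.elim
  let S : Sequence R :=
    { elems' := fun i => if i < n then r i else X ^ i
      degree_eq' := fun i => by
        split_ifs with hi
        · exact hdeg i hi
        · exact degree_X_pow i }
  have hS : ∀ i < n, S i = r i := fun i hi => if_pos hi
  rw [← S.span_degreeLT fun i hi => hS i hi ▸ hunit i hi]
  exact congrArg _ (Set.image_congr fun i hi => (hS i hi).symm)

theorem degreeLT_le_ker_of_degree_eq {K M : Type*} [DivisionRing K] [AddCommGroup M] [Module K M]
    {φ : K[X] →ₗ[K] M} {r : ℕ → K[X]} {n : ℕ} (hdeg : ∀ i < n, (r i).degree = i)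
    (hφ : ∀ i < n, φ (r i) = 0) : degreeLT K n ≤ LinearMap.ker φ := by
  have hunit : ∀ i < n, IsUnit (r i).leadingCoeff := fun i hi =>
    (leadingCoeff_ne_zero.2 (degree_ne_bot.1 (by simp [hdeg i hi]))).isUnit
  rw [← span_image_Iio_eq_degreeLT hdeg hunit, Submodule.span_le]
  exact Set.image_subset_iff.2 hφ

section CommRing

variable {ι R : Type*} [CommRing R] {s : Finset ι}

/-- The bilinear form `(f, g) ↦ ∑_{i ∈ s} w i · f(v i) · g(v i)` on polynomials attached to nodes
`v i` and weights `w i`: `discInner` over an arbitrary ring and index type. -/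
noncomputable def meshForm (s : Finset ι) (v w : ι → R) : LinearMap.BilinForm R R[X] :=
  ∑ i ∈ s, w i • (LinearMap.mul R R).compl₁₂ (leval (v i)) (leval (v i))

theorem meshForm_apply (s : Finset ι) (v w : ι → R) (f g : R[X]) :
    meshForm s v w f g = ∑ i ∈ s, w i * (f.eval (v i) * g.eval (v i)) := by
  simp [meshForm, LinearMap.sum_apply]

section DecidableEq

variable [DecidableEq ι]

/-- The product `∏_{j ≠ i} (v i - v j)` over the nodes indexed by `s`: the quantity `π_i` of the
mesh without the absolute values, so that it makes sense in any ring. -/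
def nodeDiffProd (s : Finset ι) (v : ι → R) (i : ι) : R :=
  ∏ j ∈ s.erase i, (v i - v j)

theorem nodeDiffProd_ne_zero [IsDomain R] {v : ι → R} (hv : Set.InjOn v s) {i : ι} (hi : i ∈ s) :
    nodeDiffProd s v i ≠ 0 :=
  prod_ne_zero_iff.2 fun _ hj =>
    sub_ne_zero.2 (hv.ne hi (mem_of_mem_erase hj) (ne_of_mem_erase hj).symm)

theorem meshForm_nodal_erase (v w : ι → R) (f : R[X]) {i : ι} (hi : i ∈ s) :
    meshForm s v w f (Lagrange.nodal (s.erase i) v) =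
      w i * f.eval (v i) * nodeDiffProd s v i := by
  rw [meshForm_apply, sum_eq_single_of_mem i hi, Lagrange.eval_nodal, mul_assoc, nodeDiffProd]
  intro j hj hji
  rw [Lagrange.eval_nodal_at_node (mem_erase.2 ⟨hji, hj⟩), mul_zero, mul_zero]

theorem nodal_erase_sub_nodal_erase_mem_degreeLT {d : ℕ} (hs : #s = d + 1) (v : ι → R) {i k : ι}
    (hi : i ∈ s) (hk : k ∈ s) :
    Lagrange.nodal (s.erase i) v - Lagrange.nodal (s.erase k) v ∈ degreeLT R d := by
  nontriviality R
  have hdeg : ∀ j ∈ s, (Lagrange.nodal (s.erase j) v).degree = d := fun j hj => by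
    rw [Lagrange.degree_nodal, card_erase_of_mem hj, hs, Nat.add_sub_cancel]
  rw [mem_degreeLT, ← hdeg i hi]
  exact degree_sub_lt_left ((hdeg i hi).trans (hdeg k hk).symm) Lagrange.nodal_ne_zero
    (Lagrange.nodal_monic.leadingCoeff.trans Lagrange.nodal_monic.leadingCoeff.symm)

theorem weight_mul_eval_mul_nodeDiffProd_eq {d : ℕ} (hs : #s = d + 1) {v w : ι → R} {f : R[X]}
    (hf : degreeLT R d ≤ LinearMap.ker (meshForm s v w f)) {i k : ι} (hi : i ∈ s) (hk : k ∈ s) :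
    w i * f.eval (v i) * nodeDiffProd s v i = w k * f.eval (v k) * nodeDiffProd s v k := by
  rw [← meshForm_nodal_erase v w f hi, ← meshForm_nodal_erase v w f hk, ← sub_eq_zero, ← map_sub]
  exact hf (nodal_erase_sub_nodal_erase_mem_degreeLT hs v hi hk)

end DecidableEq

theorem eval_ne_zero_of_degreeLT_le_ker [IsDomain R] {d : ℕ} (hs : #s = d + 1) {v w : ι → R}
    (hv : Set.InjOn v s) (hw : ∀ i ∈ s, w i ≠ 0) {f : R[X]}
    (hf : degreeLT R d ≤ LinearMap.ker (meshForm s v w f)) (hf0 : f ≠ 0) (hdeg : f.degree < #s)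
    {k : ι} (hk : k ∈ s) : f.eval (v k) ≠ 0 := fun hfk => by
  classical
  refine hf0 (eq_zero_of_degree_lt_of_eval_index_eq_zero s hv hdeg fun i hi => ?_)
  have hconst := weight_mul_eval_mul_nodeDiffProd_eq hs hf hi hk
  simpa [hfk, hw i hi, nodeDiffProd_ne_zero hv hi] using hconst

end CommRing

section Field

variable {ι K : Type*} [Field K] [DecidableEq ι] {s : Finset ι} {v w : ι → K} {d : ℕ}

theorem meshForm_self_eq_of_degreeLT_le_ker (hs : #s = d + 1) (hv : Set.InjOn v s)
    (hw : ∀ i ∈ s, w i ≠ 0) {f : K[X]} (hf : degreeLT K d ≤ LinearMap.ker (meshForm s v w f))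
    {k : ι} (hk : k ∈ s) :
    meshForm s v w f f = w k * f.eval (v k) ^ 2 *
      ∑ i ∈ s, (w k * nodeDiffProd s v k ^ 2) / (w i * nodeDiffProd s v i ^ 2) := by
  rw [meshForm_apply, mul_sum]
  refine sum_congr rfl fun i hi => ?_
  have hwi := hw i hi
  have hπi := nodeDiffProd_ne_zero hv hi
  have hconst := weight_mul_eval_mul_nodeDiffProd_eq hs hf hi hk
  calc w i * (f.eval (v i) * f.eval (v i))
    _ = (w i * f.eval (v i) * nodeDiffProd s v i) ^ 2 / (w i * nodeDiffProd s v i ^ 2) := by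
      field_simp
    _ = (w k * f.eval (v k) * nodeDiffProd s v k) ^ 2 / (w i * nodeDiffProd s v i ^ 2) := by
      rw [hconst]
    _ = w k * f.eval (v k) ^ 2 *
        ((w k * nodeDiffProd s v k ^ 2) / (w i * nodeDiffProd s v i ^ 2)) := by
      ring

theorem stmt_1_general (hs : #s = d + 1) (hv : Set.InjOn v s) (hw : ∀ i ∈ s, w i ≠ 0) {k : ι}
    (hk : k ∈ s) {r : ℕ → K[X]} (hdeg : ∀ i ≤ d, (r i).degree = i)
    (horth : ∀ i < d, meshForm s v w (r d) (r i) = 0)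
    (hnorm : meshForm s v w (r d) (r d) = (r d).eval (v k)) :
    (r d).eval (v k) =
      (1 / w k) *
        (∑ i ∈ s, (w k * nodeDiffProd s v k ^ 2) / (w i * nodeDiffProd s v i ^ 2))⁻¹ := by
  have hker := degreeLT_le_ker_of_degree_eq (fun i hi => hdeg i hi.le) horth
  have hrd : r d ≠ 0 := degree_ne_bot.1 (by simp [hdeg d le_rfl])
  have hdeg_lt : (r d).degree < #s := by
    rw [hdeg d le_rfl, hs]
    exact_mod_cast d.lt_succ_self
  have heval := eval_ne_zero_of_degreeLT_le_ker hs hv hw hker hrd hdeg_lt hk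
  have hself := meshForm_self_eq_of_degreeLT_le_ker hs hv hw hker hk
  rw [one_div, ← mul_inv]
  refine eq_inv_of_mul_eq_one_left (mul_left_cancel₀ heval ?_)
  linear_combination hnorm - hself

end Field

theorem discInner_eq_meshForm (s : Finset ℕ) (lam w : ℕ → ℝ) (f g : ℝ[X]) :
    discInner s lam w f g = meshForm s lam w f g := by
  simp only [discInner, meshForm_apply, mul_assoc]

theorem meshPi_sq (d : ℕ) (lam : ℕ → ℝ) (i : ℕ) :
    meshPi d lam i ^ 2 = nodeDiffProd (range (d + 1)) lam i ^ 2 := by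
  rw [meshPi, ← abs_prod, sq_abs, nodeDiffProd]

/-- Lemma 1(b): the highest-degree orthogonal polynomial satisfies
`r_d(λ_0) = (1/w_0)·(∑_{i=0}^d (w_0 π_0²)/(w_i π_i²))⁻¹`. -/
theorem stmt_1 (d : ℕ) (lam : ℕ → ℝ) (hlam : StrictAntiOn lam (Set.Iic d))
    (w : ℕ → ℝ) (hw : ∀ i ≤ d, 0 < w i)
    (hwsum : ∑ i ∈ Finset.range (d + 1), w i = 1)
    (r : ℕ → Polynomial ℝ)
    (hdeg : ∀ i ≤ d, (r i).degree = (i : WithBot ℕ))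
    (horth : ∀ i ≤ d, ∀ j ≤ d, i ≠ j →
      discInner (Finset.range (d + 1)) lam w (r i) (r j) = 0)
    (hnorm : ∀ i ≤ d,
      discInner (Finset.range (d + 1)) lam w (r i) (r i) = (r i).eval (lam 0)) :
    (r d).eval (lam 0) =
      (1 / w 0) *
        (∑ i ∈ Finset.range (d + 1),
          (w 0 * meshPi d lam 0 ^ 2) / (w i * meshPi d lam i ^ 2))⁻¹ := by
  simp only [discInner_eq_meshForm] at horth hnorm
  simpa only [meshPi_sq] using stmt_1_general (card_range (d + 1))
    (hlam.injOn.mono fun i hi => mem_range_succ_iff.1 hi)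
    (fun i hi => (hw i (mem_range_succ_iff.1 hi)).ne') (mem_range.2 d.succ_pos) hdeg
    (fun i hi => horth d le_rfl i hi.le hi.ne') (hnorm d le_rfl)
end

section
/- Let Γ be a connected bipartite graph with stable sets V_1 and V_2. Then for every nonzero eigenvalue λ_i of Γ, the local multiplicities satisfy Σ_{u∈V_1} m_u(λ_i) = Σ_{v∈V_2} m_v(λ_i) = (1/2) m(λ_i). -/
open Finset Matrix

/-! If every nonzero entry `A u v` has `u ∈ s ↔ v ∈ t`, then the double sum behind
`tr (A * M) = tr (M * A)` can be restricted to `s × t`, so the partial trace of `A * M` over `s` is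
the partial trace of `M * A` over `t`. The adjacency matrix of a bipartite graph with stable sets
`s` and `t` has this support, and when `A * M = M * A = μ • M` these are `μ` times the partial
traces of `M` over `s` and `t`. -/

theorem sum_diag_mul_comm_of_support {m n R : Type*} [Fintype m] [Fintype n]
    [NonUnitalNonAssocCommSemiring R] {A : Matrix m n R} {s : Finset m} {t : Finset n}
    (hA : ∀ u v, A u v ≠ 0 → (u ∈ s ↔ v ∈ t)) (M : Matrix n m R) :
    ∑ u ∈ s, (A * M) u u = ∑ v ∈ t, (M * A) v v := by
  have hrow : ∀ u ∈ s, ∀ v ∉ t, A u v = 0 := fun u hu v hv ↦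
    by_contra fun h ↦ hv ((hA u v h).1 hu)
  have hcol : ∀ v ∈ t, ∀ u ∉ s, A u v = 0 := fun v hv u hu ↦
    by_contra fun h ↦ hu ((hA u v h).2 hv)
  simp only [mul_apply]
  calc ∑ u ∈ s, ∑ v, A u v * M v u = ∑ u ∈ s, ∑ v ∈ t, A u v * M v u :=
        sum_congr rfl fun u hu ↦ (sum_subset (subset_univ t) fun v _ hv ↦ by
          rw [hrow u hu v hv, zero_mul]).symm
    _ = ∑ v ∈ t, ∑ u ∈ s, M v u * A u v := by
        simp only [mul_comm (A _ _)]
        exact sum_comm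
    _ = ∑ v ∈ t, ∑ u, M v u * A u v :=
        sum_congr rfl fun v hv ↦ sum_subset (subset_univ s) fun u _ hu ↦ by
          rw [hcol v hv u hu, mul_zero]

theorem mul_eq_smul_of_isSymm {n R : Type*} [Fintype n] [CommSemiring R] {A M : Matrix n n R}
    {μ : R} (hA : A.IsSymm) (hM : M.IsSymm) (h : A * M = μ • M) : M * A = μ • M := by
  simpa only [transpose_mul, transpose_smul, hA.eq, hM.eq] using congrArg transpose h

theorem isBipartiteWith_of_union_eq_univ {V : Type*} [Fintype V] [DecidableEq V]
    {G : SimpleGraph V} {s t : Finset V} (hcover : s ∪ t = univ) (hdisj : Disjoint s t)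
    (hs : ∀ u ∈ s, ∀ v ∈ s, ¬ G.Adj u v) (ht : ∀ u ∈ t, ∀ v ∈ t, ¬ G.Adj u v) :
    G.IsBipartiteWith s t where
  disjoint := disjoint_coe.2 hdisj
  mem_of_adj u v huv := by
    have hu : u ∈ s ∨ u ∈ t := mem_union.1 (hcover ▸ mem_univ u)
    have hv : v ∈ s ∨ v ∈ t := mem_union.1 (hcover ▸ mem_univ v)
    rcases hu with hu | hu <;> rcases hv with hv | hv
    · exact absurd huv (hs u hu v hv)
    · exact Or.inl ⟨hu, hv⟩
    · exact Or.inr ⟨hu, hv⟩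
    · exact absurd huv (ht u hu v hv)

section Bipartite

variable {V R : Type*} [Fintype V] [CommSemiring R] {G : SimpleGraph V} [DecidableRel G.Adj]
  {s t : Finset V}

theorem sum_diag_adjMatrix_mul_comm (hG : G.IsBipartiteWith s t) (M : Matrix V V R) :
    ∑ u ∈ s, (G.adjMatrix R * M) u u = ∑ v ∈ t, (M * G.adjMatrix R) v v := by
  refine sum_diag_mul_comm_of_support (fun u v huv ↦ ?_) M
  have hadj : G.Adj u v := by_contra fun h ↦ huv (if_neg h)
  exact ⟨fun hu ↦ hG.mem_of_mem_adj hu hadj, fun hv ↦ hG.symm.mem_of_mem_adj hv hadj.symm⟩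

variable {M : Matrix V V R} {μ : R}

theorem sum_diag_eq_sum_diag_of_isBipartiteWith [IsLeftCancelMulZero R]
    (hG : G.IsBipartiteWith s t) (hμ : μ ≠ 0)
    (hleft : G.adjMatrix R * M = μ • M) (hright : M * G.adjMatrix R = μ • M) :
    ∑ u ∈ s, M u u = ∑ v ∈ t, M v v := by
  refine mul_left_cancel₀ hμ ?_
  simpa only [hleft, hright, Matrix.smul_apply, smul_eq_mul, ← mul_sum] using
    sum_diag_adjMatrix_mul_comm hG M

/-- A vertex outside `s ∪ t` is isolated, so its row of `G.adjMatrix R * M = μ • M` is zero. -/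
theorem sum_diag_add_sum_diag_eq_trace_of_isBipartiteWith [NoZeroDivisors R]
    (hG : G.IsBipartiteWith s t) (hμ : μ ≠ 0)
    (hleft : G.adjMatrix R * M = μ • M) :
    ∑ u ∈ s, M u u + ∑ v ∈ t, M v v = M.trace := by
  rw [← sum_disjUnion (disjoint_coe.1 hG.disjoint)]
  refine sum_subset (subset_univ _) fun u _ hu ↦ ?_
  have hisolated : ∀ v, ¬ G.Adj u v := fun v huv ↦
    hu (mem_disjUnion.2 ((hG.mem_of_adj huv).imp And.left And.left))
  have hrow : (G.adjMatrix R * M) u u = 0 := by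
    rw [SimpleGraph.adjMatrix_mul_apply]
    exact sum_eq_zero fun v hv ↦ absurd ((G.mem_neighborFinset u v).1 hv) (hisolated v)
  rw [hleft, Matrix.smul_apply, smul_eq_mul] at hrow
  exact (mul_eq_zero.1 hrow).resolve_left hμ

end Bipartite

theorem stmt_3_general {V K : Type*} [Fintype V] [Field K] [NeZero (2 : K)] {G : SimpleGraph V}
    [DecidableRel G.Adj] {s t : Finset V} (hG : G.IsBipartiteWith s t) {M : Matrix V V K} {μ : K}
    (hμ : μ ≠ 0) (hleft : G.adjMatrix K * M = μ • M) (hright : M * G.adjMatrix K = μ • M) :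
    ∑ u ∈ s, M u u = ∑ v ∈ t, M v v ∧ ∑ u ∈ s, M u u = M.trace / 2 := by
  have heq := sum_diag_eq_sum_diag_of_isBipartiteWith hG hμ hleft hright
  refine ⟨heq, eq_div_of_mul_eq two_ne_zero ?_⟩
  rw [mul_two, ← sum_diag_add_sum_diag_eq_trace_of_isBipartiteWith hG hμ hleft, ← heq]

/-- Lemma 2(a): in a connected bipartite graph with stable sets `V₁, V₂`, the local
multiplicities `m_u(λ_i) = (E_i)_{uu}` of any nonzero eigenvalue `λ_i` satisfy
`∑_{u∈V₁} m_u(λ_i) = ∑_{v∈V₂} m_v(λ_i) = m(λ_i)/2`. -/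
theorem stmt_3 {V : Type*} [Fintype V] [DecidableEq V]
    (G : SimpleGraph V) [DecidableRel G.Adj] (hconn : G.Connected)
    (V1 V2 : Finset V) (hcover : V1 ∪ V2 = Finset.univ) (hdisj : Disjoint V1 V2)
    (hind1 : ∀ u ∈ V1, ∀ v ∈ V1, ¬ G.Adj u v)
    (hind2 : ∀ u ∈ V2, ∀ v ∈ V2, ¬ G.Adj u v)
    -- the distinct eigenvalues `λ_0 > λ_1 > ⋯ > λ_d` and principal idempotents `E_i`
    (d : ℕ) (lam : ℕ → ℝ) (hlam : StrictAntiOn lam (Set.Iic d))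
    (E : ℕ → Matrix V V ℝ)
    (hsym : ∀ i ≤ d, (E i).IsSymm)
    (hsum : ∑ i ∈ Finset.range (d + 1), E i = 1)
    (hmul : ∀ i ≤ d, ∀ j ≤ d, E i * E j = if i = j then E i else 0)
    (heig : ∀ i ≤ d, G.adjMatrix ℝ * E i = lam i • E i)
    (hnz : ∀ i ≤ d, E i ≠ 0) :
    ∀ i ≤ d, lam i ≠ 0 →
      (∑ u ∈ V1, E i u u = ∑ v ∈ V2, E i v v ∧
        ∑ u ∈ V1, E i u u = Matrix.trace (E i) / 2) := by
  intro i hi hμ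
  exact stmt_3_general (isBipartiteWith_of_union_eq_univ hcover hdisj hind1 hind2) hμ (heig i hi)
    (mul_eq_smul_of_isSymm G.isSymm_adjMatrix (hsym i hi) (heig i hi))
end

section
/- Let Γ be a connected bipartite graph with stable sets V_1 and V_2 of sizes n_1 and n_2. Then the local multiplicities of the eigenvalue 0 satisfy Σ_{u∈V_1} m_u(0) = (1/2)(n_1 − n_2 + m(0)). -/
open Finset Matrix

/-!
A spectral resolution `∑ E_i = 1` with `A E_i = λ_i E_i` gives `p(A) = ∑ p(λ_i) E_i` for every
polynomial `p`. Choosing `p(0) = 1` and `p(λ_i) = 0` at the nonzero `λ_i` realizes the projection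
onto the kernel of `A` as `p(A)`. When `A` is supported between `V₁` and `V₂`, each power `A ^ k`
with `k ≥ 1` has equal diagonal sums over `V₁` and `V₂` (every closed walk alternates between the
two parts), so in `p(A)` only the constant term contributes to the difference of these sums,
namely `n₁ - n₂`.
-/

section SpectralResolution

open Polynomial

variable {S ι : Type*} [Ring S] {I : Finset ι} {a : S} {e : ι → S}

theorem aeval_eq_sum_eval_smul {R : Type*} [CommRing R] [Algebra R S] {μ : ι → R}
    (hsum : ∑ i ∈ I, e i = 1) (heig : ∀ i ∈ I, a * e i = μ i • e i) (p : R[X]) :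
    aeval a p = ∑ i ∈ I, p.eval (μ i) • e i := by
  rw [← mul_one (aeval a p), ← hsum, mul_sum]
  refine sum_congr rfl fun i hi => ?_
  have heigen : Algebra.lmul R S a (e i) = μ i • e i := heig i hi
  have haeval := Module.End.aeval_apply_of_mem_apply_eq_smul (p := p) heigen
  rwa [aeval_algHom_apply] at haeval

theorem exists_eval_zero_eq_one_and_aeval_eq_sum_filter {K : Type*} [Field K] [DecidableEq K]
    [Algebra K S] {μ : ι → K} (hsum : ∑ i ∈ I, e i = 1)
    (heig : ∀ i ∈ I, a * e i = μ i • e i) :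
    ∃ p : K[X], p.eval 0 = 1 ∧ aeval a p = ∑ i ∈ I with μ i = 0, e i := by
  let p : K[X] := Lagrange.basis (insert 0 (I.image μ)) id 0
  have hp_zero : p.eval 0 = 1 :=
    Lagrange.eval_basis_self Function.injective_id.injOn (mem_insert_self 0 _)
  have hp_ne : ∀ i ∈ I, μ i ≠ 0 → p.eval (μ i) = 0 := fun i hi hμ =>
    Lagrange.eval_basis_of_ne (v := id) hμ.symm (mem_insert_of_mem (mem_image_of_mem μ hi))
  refine ⟨p, hp_zero, ?_⟩
  rw [aeval_eq_sum_eval_smul hsum heig, sum_filter]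
  refine sum_congr rfl fun i hi => ?_
  split_ifs with hμ
  · rw [hμ, hp_zero, one_smul]
  · rw [hp_ne i hi hμ, zero_smul]

end SpectralResolution

/-- A matrix is bipartite with parts `V1` and `V2` if these partition its index set and it has no
nonzero entry inside either part. For the adjacency matrix of a graph this says that `V1` and `V2`
are the stable sets of a bipartition. -/
structure IsBipartiteMatrix {V R : Type*} [Fintype V] [Zero R] (A : Matrix V V R)
    (V1 V2 : Finset V) : Prop where
  isCompl : IsCompl V1 V2
  eq_zero_left : ∀ u ∈ V1, ∀ v ∈ V1, A u v = 0
  eq_zero_right : ∀ u ∈ V2, ∀ v ∈ V2, A u v = 0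

namespace IsBipartiteMatrix

variable {V R : Type*} [Fintype V] {V1 V2 : Finset V} {A : Matrix V V R}

theorem sum_diag_mul_comm [NonUnitalCommSemiring R] (hA : IsBipartiteMatrix A V1 V2)
    (B : Matrix V V R) : ∑ u ∈ V1, (A * B) u u = ∑ v ∈ V2, (B * A) v v := by
  have hrow : ∀ u ∈ V1, (A * B) u u = ∑ v ∈ V2, A u v * B v u := fun u hu => by
    rw [mul_apply, ← hA.isCompl.sum_add_sum, sum_eq_zero, zero_add]
    exact fun v hv => by rw [hA.eq_zero_left u hu v hv, zero_mul]
  have hcol : ∀ v ∈ V2, (B * A) v v = ∑ u ∈ V1, A u v * B v u := fun v hv => by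
    rw [mul_apply, ← hA.isCompl.sum_add_sum, sum_eq_zero (s := V2), add_zero]
    · exact sum_congr rfl fun u _ => mul_comm _ _
    · exact fun u hu => by rw [hA.eq_zero_right u hu v hv, mul_zero]
  rw [sum_congr rfl hrow, sum_congr rfl hcol, sum_comm]

open Polynomial in
theorem sum_diag_aeval_sub_sum_diag_aeval [DecidableEq V] [CommRing R]
    (hA : IsBipartiteMatrix A V1 V2) (p : R[X]) :
    ∑ u ∈ V1, aeval A p u u - ∑ u ∈ V2, aeval A p u u = p.eval 0 * (#V1 - #V2) := by
  set B := aeval A p.divX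
  have hleft : aeval A p = A * B + p.eval 0 • 1 := by
    conv_lhs => rw [← X_mul_divX_add p]
    rw [map_add, map_mul, aeval_X, aeval_C, Algebra.algebraMap_eq_smul_one,
      coeff_zero_eq_eval_zero]
  have hright : aeval A p = B * A + p.eval 0 • 1 := by
    conv_lhs => rw [← divX_mul_X_add p]
    rw [map_add, map_mul, aeval_X, aeval_C, Algebra.algebraMap_eq_smul_one,
      coeff_zero_eq_eval_zero]
  have hV1_sum : ∑ u ∈ V1, aeval A p u u = ∑ u ∈ V1, (A * B) u u + #V1 * p.eval 0 := by
    simp [hleft, sum_add_distrib]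
  have hV2_sum : ∑ u ∈ V2, aeval A p u u = ∑ u ∈ V2, (B * A) u u + #V2 * p.eval 0 := by
    simp [hright, sum_add_distrib]
  rw [hV1_sum, hV2_sum, hA.sum_diag_mul_comm]
  ring

end IsBipartiteMatrix

theorem stmt_4_general {V K ι : Type*} [Fintype V] [DecidableEq V] [Field K] [DecidableEq K]
    {V1 V2 : Finset V} {A : Matrix V V K} (hA : IsBipartiteMatrix A V1 V2)
    {I : Finset ι} {lam : ι → K} {E : ι → Matrix V V K} (hsum : ∑ i ∈ I, E i = 1)
    (heig : ∀ i ∈ I, A * E i = lam i • E i) :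
    2 * ∑ u ∈ V1, ∑ i ∈ I with lam i = 0, E i u u
      = #V1 - #V2 + ∑ i ∈ I with lam i = 0, (E i).trace := by
  obtain ⟨p, hp_zero, hp⟩ := exists_eval_zero_eq_one_and_aeval_eq_sum_filter hsum heig
  have hdiff := hA.sum_diag_aeval_sub_sum_diag_aeval p
  simp only [hp, Matrix.sum_apply, hp_zero, one_mul] at hdiff
  have htrace : ∑ u ∈ V1, ∑ i ∈ I with lam i = 0, E i u u
      + ∑ u ∈ V2, ∑ i ∈ I with lam i = 0, E i u u = ∑ i ∈ I with lam i = 0, (E i).trace := by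
    rw [hA.isCompl.sum_add_sum]
    exact sum_comm
  linear_combination hdiff + htrace

/-- Lemma 2(b1): in a connected bipartite graph with stable sets `V₁, V₂` of sizes
`n₁, n₂`, the local multiplicities of the eigenvalue `0` satisfy
`∑_{u∈V₁} m_u(0) = (n₁ − n₂ + m(0))/2`, where `m(0)` is the multiplicity of `0`
(with `m(0) = 0` and `m_u(0) = 0` when `0` is not an eigenvalue; both sides below use
the sum over those indices `i` with `λ_i = 0`, which has at most one term). -/
theorem stmt_4 {V : Type*} [Fintype V] [DecidableEq V]
    (G : SimpleGraph V) [DecidableRel G.Adj] (hconn : G.Connected)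
    (V1 V2 : Finset V) (hcover : V1 ∪ V2 = Finset.univ) (hdisj : Disjoint V1 V2)
    (hind1 : ∀ u ∈ V1, ∀ v ∈ V1, ¬ G.Adj u v)
    (hind2 : ∀ u ∈ V2, ∀ v ∈ V2, ¬ G.Adj u v)
    (d : ℕ) (lam : ℕ → ℝ) (hlam : StrictAntiOn lam (Set.Iic d))
    (E : ℕ → Matrix V V ℝ)
    (hsym : ∀ i ≤ d, (E i).IsSymm)
    (hsum : ∑ i ∈ Finset.range (d + 1), E i = 1)
    (hmul : ∀ i ≤ d, ∀ j ≤ d, E i * E j = if i = j then E i else 0)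
    (heig : ∀ i ≤ d, G.adjMatrix ℝ * E i = lam i • E i)
    (hnz : ∀ i ≤ d, E i ≠ 0) :
    ∑ u ∈ V1, (∑ i ∈ (Finset.range (d + 1)).filter (fun i => lam i = 0), E i u u)
      = ((V1.card : ℝ) - (V2.card : ℝ)
          + ∑ i ∈ (Finset.range (d + 1)).filter (fun i => lam i = 0),
              Matrix.trace (E i)) / 2 := by
  rw [eq_div_iff two_ne_zero, mul_comm]
  exact stmt_4_general ⟨⟨hdisj, codisjoint_iff.2 hcover⟩, by simpa using hind1,
    by simpa using hind2⟩ hsum fun i hi => heig i (mem_range_succ_iff.1 hi)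
end

section
/- Let Γ be a connected bipartite graph with stable sets V_1 and V_2 of sizes n_1 and n_2. Then the local multiplicities of the eigenvalue 0 satisfy Σ_{v∈V_2} m_v(0) = (1/2)(n_2 − n_1 + m(0)). -/
open Finset Matrix

/-!
Let `A` have zero diagonal blocks on `U` and `W`. The diagonal of `A * E` over `W` and that of
`E * A` over `U` both sum to `∑ A v u * E u v` over `v ∈ W`, `u ∈ U`. If `A * E = E * A = μ • E`,
this says that a nonzero eigenvalue `μ` has the same total local multiplicity on both sides. Since
the local multiplicities at each vertex add up to `1`, the excess `#W - #U` is carried entirely by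
the eigenvalue `0`.
-/

section

variable {V ι R : Type*}

theorem sum_sum_diag_eq_card [DecidableEq V] [AddCommMonoidWithOne R] {s : Finset ι}
    {E : ι → Matrix V V R} (hsum : ∑ i ∈ s, E i = 1) (W : Finset V) :
    ∑ i ∈ s, ∑ v ∈ W, E i v v = #W := by
  have hdiag (v : V) : ∑ i ∈ s, E i v v = 1 := by
    rw [← Matrix.sum_apply, hsum, one_apply_eq]
  rw [sum_comm, sum_congr rfl fun v _ => hdiag v, sum_const, nsmul_one]

variable [Fintype V]

theorem mul_eq_smul_of_isSymm_s5 [NonUnitalCommSemiring R] {A E : Matrix V V R} {μ : R}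
    (hA : A.IsSymm) (hE : E.IsSymm) (h : A * E = μ • E) : E * A = μ • E := by
  simpa only [transpose_mul, transpose_smul, hA.eq, hE.eq] using congrArg transpose h

variable {U W : Finset V} {A : Matrix V V R}

theorem sum_diag_mul_comm_of_bipartite [NonUnitalCommSemiring R] (hUW : IsCompl U W)
    (hU : ∀ u ∈ U, ∀ v ∈ U, A u v = 0) (hW : ∀ u ∈ W, ∀ v ∈ W, A u v = 0)
    (B : Matrix V V R) : ∑ v ∈ W, (A * B) v v = ∑ u ∈ U, (B * A) u u := by
  have hleft (v : V) (hv : v ∈ W) : (A * B) v v = ∑ u ∈ U, A v u * B u v := by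
    have hvanish : ∑ w ∈ W, A v w * B w v = 0 :=
      sum_eq_zero fun w hw => by rw [hW v hv w hw, zero_mul]
    rw [mul_apply, ← hUW.sum_add_sum, hvanish, add_zero]
  have hright (u : V) (hu : u ∈ U) : (B * A) u u = ∑ v ∈ W, B u v * A v u := by
    have hvanish : ∑ w ∈ U, B u w * A w u = 0 :=
      sum_eq_zero fun w hw => by rw [hU w hw u hu, mul_zero]
    rw [mul_apply, ← hUW.sum_add_sum, hvanish, zero_add]
  simp only [sum_congr rfl hleft, sum_congr rfl hright, mul_comm (B _ _)]
  exact sum_comm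

theorem sum_diag_eq_of_bipartite_of_eigenvalue_ne_zero [NonUnitalCommSemiring R] [IsCancelMulZero R]
    (hUW : IsCompl U W) (hU : ∀ u ∈ U, ∀ v ∈ U, A u v = 0) (hW : ∀ u ∈ W, ∀ v ∈ W, A u v = 0)
    {E : Matrix V V R} {μ : R} (hμ : μ ≠ 0) (hleft : A * E = μ • E) (hright : E * A = μ • E) :
    ∑ v ∈ W, E v v = ∑ u ∈ U, E u u := by
  refine mul_left_cancel₀ hμ ?_
  simpa only [hleft, hright, Matrix.smul_apply, smul_eq_mul, ← mul_sum] using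
    sum_diag_mul_comm_of_bipartite hUW hU hW E

theorem stmt_5_general [DecidableEq V] [CommRing R] [NoZeroDivisors R] [DecidableEq R]
    (hUW : IsCompl U W) (hU : ∀ u ∈ U, ∀ v ∈ U, A u v = 0) (hW : ∀ u ∈ W, ∀ v ∈ W, A u v = 0)
    {s : Finset ι} {μ : ι → R} {E : ι → Matrix V V R} (hsum : ∑ i ∈ s, E i = 1)
    (hleft : ∀ i ∈ s, A * E i = μ i • E i) (hright : ∀ i ∈ s, E i * A = μ i • E i) :
    2 * ∑ v ∈ W, ∑ i ∈ s with μ i = 0, E i v v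
      = (#W : R) - #U + ∑ i ∈ s with μ i = 0, trace (E i) := by
  have hnonzero (i : ι) (hi : i ∈ s) (hμ : μ i ≠ 0) :
      ∑ v ∈ W, E i v v - ∑ u ∈ U, E i u u = 0 :=
    sub_eq_zero.mpr <| sum_diag_eq_of_bipartite_of_eigenvalue_ne_zero hUW hU hW hμ (hleft i hi)
      (hright i hi)
  have hexcess : ∑ i ∈ s with μ i = 0, (∑ v ∈ W, E i v v - ∑ u ∈ U, E i u u) = (#W : R) - #U := by
    rw [sum_filter_of_ne fun i hi => not_imp_comm.mp (hnonzero i hi), sum_sub_distrib,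
      sum_sum_diag_eq_card hsum, sum_sum_diag_eq_card hsum]
  have htrace (i : ι) : trace (E i) = ∑ u ∈ U, E i u u + ∑ v ∈ W, E i v v :=
    (hUW.sum_add_sum _).symm
  rw [← hexcess, ← sum_add_distrib, sum_comm, mul_sum]
  refine sum_congr rfl fun i _ => ?_
  rw [htrace]
  ring

end

/-- Lemma 2(b2): in a connected bipartite graph with stable sets `V₁, V₂` of sizes
`n₁, n₂`, the local multiplicities of the eigenvalue `0` satisfy
`∑_{v∈V₂} m_v(0) = (n₂ − n₁ + m(0))/2`, where `m(0)` is the multiplicity of `0`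
(with `m(0) = 0` and `m_v(0) = 0` when `0` is not an eigenvalue; both sides below use
the sum over those indices `i` with `λ_i = 0`, which has at most one term). -/
theorem stmt_5 {V : Type*} [Fintype V] [DecidableEq V]
    (G : SimpleGraph V) [DecidableRel G.Adj] (hconn : G.Connected)
    (V1 V2 : Finset V) (hcover : V1 ∪ V2 = Finset.univ) (hdisj : Disjoint V1 V2)
    (hind1 : ∀ u ∈ V1, ∀ v ∈ V1, ¬ G.Adj u v)
    (hind2 : ∀ u ∈ V2, ∀ v ∈ V2, ¬ G.Adj u v)
    (d : ℕ) (lam : ℕ → ℝ) (hlam : StrictAntiOn lam (Set.Iic d))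
    (E : ℕ → Matrix V V ℝ)
    (hsym : ∀ i ≤ d, (E i).IsSymm)
    (hsum : ∑ i ∈ Finset.range (d + 1), E i = 1)
    (hmul : ∀ i ≤ d, ∀ j ≤ d, E i * E j = if i = j then E i else 0)
    (heig : ∀ i ≤ d, G.adjMatrix ℝ * E i = lam i • E i)
    (hnz : ∀ i ≤ d, E i ≠ 0) :
    ∑ v ∈ V2, (∑ i ∈ (Finset.range (d + 1)).filter (fun i => lam i = 0), E i v v)
      = ((V2.card : ℝ) - (V1.card : ℝ)
          + ∑ i ∈ (Finset.range (d + 1)).filter (fun i => lam i = 0),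
              Matrix.trace (E i)) / 2 := by
  have hle (i : ℕ) (hi : i ∈ range (d + 1)) : i ≤ d := mem_range_succ_iff.mp hi
  rw [eq_div_iff two_ne_zero, mul_comm]
  exact stmt_5_general ⟨hdisj, codisjoint_iff.mpr hcover⟩
    (by simpa [G.adjMatrix_apply] using hind1) (by simpa [G.adjMatrix_apply] using hind2) hsum
    (fun i hi => heig i (hle i hi))
    fun i hi => mul_eq_smul_of_isSymm_s5 G.isSymm_adjMatrix (hsym i (hle i hi)) (heig i (hle i hi))
end

section
/- Let Γ be a connected graph and u a vertex of Γ with d_u + 1 distinct local eigenvalues. Then equality q_{d_u−1}^u(λ_0)/‖q_{d_u−1}^u‖_u = (1/α_u)·‖ρ_{N_{d_u−1}(u)}‖ holds if and only if u has maximum eccentricity ecc(u) = d_u and Γ is pseudo-distance-regular around u. -/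
open Polynomial Finset Matrix

/-- `Γ_i(u)`: the set of vertices at distance `i` from `u`. -/
noncomputable def sphere {V : Type*} [Fintype V] [DecidableEq V] (G : SimpleGraph V)
    (u : V) (i : ℕ) : Finset V :=
  Finset.univ.filter (fun v => G.dist u v = i)

/-- `Γ` is pseudo-distance-regular around `u` (w.r.t. the positive eigenvector `α`):
for every `i`, the numbers `c_i^*(v)`, `a_i^*(v)`, `b_i^*(v)` do not depend on the
choice of `v ∈ Γ_i(u)`. -/
def IsPDRAround {V : Type*} [Fintype V] [DecidableEq V] (G : SimpleGraph V)
    [DecidableRel G.Adj] (alpha : V → ℝ) (u : V) : Prop :=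
  ∀ i : ℕ, ∀ v v' : V, G.dist u v = i → G.dist u v' = i →
    ((1 / alpha v) * ∑ w ∈ sphere G u (i - 1) ∩ G.neighborFinset v, alpha w
        = (1 / alpha v') * ∑ w ∈ sphere G u (i - 1) ∩ G.neighborFinset v', alpha w) ∧
    ((1 / alpha v) * ∑ w ∈ sphere G u i ∩ G.neighborFinset v, alpha w
        = (1 / alpha v') * ∑ w ∈ sphere G u i ∩ G.neighborFinset v', alpha w) ∧
    ((1 / alpha v) * ∑ w ∈ sphere G u (i + 1) ∩ G.neighborFinset v, alpha w
        = (1 / alpha v') * ∑ w ∈ sphere G u (i + 1) ∩ G.neighborFinset v', alpha w)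

/-!
Let `K_k` be the space of vectors `f(A) e_u` with `deg f < k`. The local scalar product of
polynomials is the dot product of these vectors, and `α_u q_{k-1}(A) e_u` is the orthogonal
projection of `α` on `K_k`. Every element of `K_k` vanishes at distance `≥ k` from `u`, so it is
also the projection of `ρ`, the restriction of `α` to the vertices at distance `< k`. Comparing
norms, equality holds if and only if `ρ ∈ K_k`.

For `k = d_u` the next space `K_{k+1}` is `A`-invariant and contains `α`, but `α ∉ K_k`. If
`ρ ∈ K_k`, then `A ^ j (α - ρ)` vanishes at distance `< k - j` while not being orthogonal to
`A ^ (k - j) e_u`. By descending induction on `i`, a vector of `K_{k+1}` orthogonal to `K_i` then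
vanishes at distance `< i`; applied to `α` minus its projection on `K_i`, this puts the restriction
of `α` to every ball, hence to every sphere, into the Krylov space of the matching degree. These
restrictions span `K_{k+1}`, and the invariance of their span under `A` is
pseudo-distance-regularity.
-/

section Krylov

/-- The Krylov space of order `k` of an endomorphism `T` at `b`: the vectors `f(T) b` with
`deg f < k`. -/
noncomputable def krylov {R M : Type*} [CommRing R] [AddCommGroup M] [Module R M]
    (T : Module.End R M) (b : M) (k : ℕ) : Submodule R M :=
  (degreeLT R k).map (LinearMap.applyₗ b ∘ₗ (aeval T).toLinearMap)

variable {R M : Type*} [CommRing R] [AddCommGroup M] [Module R M] {T : Module.End R M} {b : M}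
  {k l : ℕ}

theorem mem_krylov {x : M} : x ∈ krylov T b k ↔ ∃ f : R[X], f.degree < k ∧ aeval T f b = x := by
  simp [krylov, Submodule.mem_map, mem_degreeLT]

theorem aeval_mem_krylov {f : R[X]} (hf : f.degree < k) : aeval T f b ∈ krylov T b k :=
  mem_krylov.mpr ⟨f, hf, rfl⟩

theorem krylov_mono (h : k ≤ l) : krylov T b k ≤ krylov T b l :=
  Submodule.map_mono (degreeLT_mono h)

theorem apply_mem_krylov_succ {x : M} (hx : x ∈ krylov T b k) : T x ∈ krylov T b (k + 1) := by
  obtain ⟨f, hf, rfl⟩ := mem_krylov.mp hx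
  refine mem_krylov.mpr ⟨X * f, ?_, by simp⟩
  nontriviality R
  rw [mul_comm, degree_mul_X, Nat.cast_add, Nat.cast_one]
  exact WithBot.add_lt_add_right WithBot.one_ne_bot hf

theorem aeval_apply_mem_krylov_natDegree [Nontrivial R] {m : R[X]} (hm : m.Monic)
    (h : aeval T m b = 0) (f : R[X]) : aeval T f b ∈ krylov T b m.natDegree := by
  refine mem_krylov.mpr ⟨f %ₘ m, ?_, ?_⟩
  · exact (degree_modByMonic_lt f hm).trans_eq (degree_eq_natDegree hm.ne_zero)
  · conv_rhs => rw [← modByMonic_add_div f m, mul_comm m]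
    simp [h]

theorem krylov_le_iff_of_degree_eq {K M : Type*} [Field K] [AddCommGroup M] [Module K M]
    {T : Module.End K M} {b : M} {k : ℕ} {p : ℕ → K[X]} (hp : ∀ i < k, (p i).degree = i)
    {S : Submodule K M} : krylov T b k ≤ S ↔ ∀ i < k, aeval T (p i) b ∈ S := by
  let q : Polynomial.Sequence K :=
    ⟨fun i => if i < k then p i else X ^ i, fun i => by split_ifs with hi <;> simp [hp, hi]⟩
  have hq : ∀ i < k, q i = p i := fun i hi => if_pos hi
  rw [krylov, Submodule.map_le_iff_le_comap,
    ← q.span_degreeLT fun i _ => (leadingCoeff_ne_zero.mpr (q.ne_zero i)).isUnit,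
    Submodule.span_le, Set.image_subset_iff]
  exact forall₂_congr fun i hi => by simp [hq i hi]

theorem krylov_le_iff {K M : Type*} [Field K] [AddCommGroup M] [Module K M]
    {T : Module.End K M} {b : M} {k : ℕ} {S : Submodule K M} :
    krylov T b k ≤ S ↔ ∀ i < k, (T ^ i) b ∈ S := by
  simpa using krylov_le_iff_of_degree_eq (T := T) (b := b) (fun i _ => degree_X_pow (R := K) i)

end Krylov

section DotProduct

variable {n R : Type*} [Fintype n] [CommRing R] {A : Matrix n n R}

theorem mulVec_dotProduct_of_isSymm (hA : A.IsSymm) (x y : n → R) :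
    (A *ᵥ x) ⬝ᵥ y = x ⬝ᵥ (A *ᵥ y) := by
  rw [dotProduct_mulVec, ← mulVec_transpose, hA.eq]

theorem aeval_mulVecLin_dotProduct_of_isSymm (hA : A.IsSymm) (f : R[X]) (x y : n → R) :
    aeval A.mulVecLin f x ⬝ᵥ y = x ⬝ᵥ aeval A.mulVecLin f y := by
  induction f using Polynomial.induction_on generalizing x with
  | C a => simp
  | add f g hf hg => simp [add_dotProduct, dotProduct_add, hf, hg]
  | monomial i a ih =>
    calc aeval A.mulVecLin (C a * X ^ (i + 1)) x ⬝ᵥ y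
        = aeval A.mulVecLin (C a * X ^ i) (A *ᵥ x) ⬝ᵥ y := by simp [pow_succ]
      _ = x ⬝ᵥ (A *ᵥ aeval A.mulVecLin (C a * X ^ i) y) := by
          rw [ih, mulVec_dotProduct_of_isSymm hA]
      _ = x ⬝ᵥ aeval A.mulVecLin (C a * X ^ (i + 1)) y := by simp [pow_succ', mulVec_smul]

theorem aeval_mulVecLin_dotProduct_eigenvector (hA : A.IsSymm) {μ : R} {α : n → R}
    (hα : A *ᵥ α = μ • α) (f : R[X]) (b : n → R) :
    aeval A.mulVecLin f b ⬝ᵥ α = f.eval μ * (b ⬝ᵥ α) := by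
  rw [aeval_mulVecLin_dotProduct_of_isSymm hA,
    Module.End.aeval_apply_of_mem_apply_eq_smul (by simpa using hα), dotProduct_smul, smul_eq_mul]

end DotProduct

section OrthogonalProjection

variable {n : Type*} [Fintype n]

/-- `x` is the orthogonal projection of `a` onto `W` with respect to the dot product of `n → ℝ`
(whose norm in Mathlib is the supremum norm, so that `Submodule.starProjection` does not apply). -/
def IsOrthProj (W : Submodule ℝ (n → ℝ)) (a x : n → ℝ) : Prop :=
  x ∈ W ∧ ∀ y ∈ W, x ⬝ᵥ y = a ⬝ᵥ y

variable {W : Submodule ℝ (n → ℝ)} {a b x : n → ℝ}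

theorem exists_isOrthProj (W : Submodule ℝ (n → ℝ)) (a : n → ℝ) : ∃ x, IsOrthProj W a x := by
  let e := WithLp.linearEquiv 2 ℝ (n → ℝ)
  let W' := W.comap e.toLinearMap
  refine ⟨e (W'.starProjection (e.symm a)), W'.starProjection_apply_mem _, fun y hy => ?_⟩
  have h := W'.starProjection_inner_eq_zero (e.symm a) (e.symm y) (by simpa [W'] using hy)
  rw [inner_sub_left, sub_eq_zero] at h
  simpa [e, EuclideanSpace.inner_eq_star_dotProduct, dotProduct_comm] using h.symm

theorem IsOrthProj.congr (h : IsOrthProj W a x) (hab : ∀ y ∈ W, a ⬝ᵥ y = b ⬝ᵥ y) :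
    IsOrthProj W b x :=
  ⟨h.1, fun y hy => (h.2 y hy).trans (hab y hy)⟩

theorem IsOrthProj.eq_iff_mem (h : IsOrthProj W a x) : x = a ↔ a ∈ W := by
  refine ⟨fun hxa => hxa ▸ h.1, fun ha => ?_⟩
  rw [← sub_eq_zero, ← dotProduct_self_eq_zero, sub_dotProduct, sub_eq_zero]
  exact h.2 _ (W.sub_mem h.1 ha)

theorem IsOrthProj.dotProduct_self_eq_iff (h : IsOrthProj W a x) :
    x ⬝ᵥ x = a ⬝ᵥ a ↔ a ∈ W := by
  have hdist : (x - a) ⬝ᵥ (x - a) = a ⬝ᵥ a - x ⬝ᵥ x := by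
    rw [sub_dotProduct, dotProduct_sub, dotProduct_sub, dotProduct_comm x a, ← h.2 x h.1]
    ring
  rw [← h.eq_iff_mem, ← sub_eq_zero (a := x), ← dotProduct_self_eq_zero, hdist, sub_eq_zero,
    eq_comm]

/-- The Riesz representative on a Krylov space of evaluation at an eigenvalue is, up to scaling,
the projection of the eigenvector. -/
theorem isOrthProj_krylov_sum {A : Matrix n n ℝ} (hA : A.IsSymm) {μ : ℝ} {α b : n → ℝ}
    (hα : A *ᵥ α = μ • α) {p : ℕ → ℝ[X]} {k : ℕ} (hdeg : ∀ i < k, (p i).degree = i)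
    (horth : ∀ i < k, ∀ j < k, i ≠ j →
      aeval A.mulVecLin (p i) b ⬝ᵥ aeval A.mulVecLin (p j) b = 0)
    (hnorm : ∀ i < k, aeval A.mulVecLin (p i) b ⬝ᵥ aeval A.mulVecLin (p i) b = (p i).eval μ) :
    IsOrthProj (krylov A.mulVecLin b k) α
      ((b ⬝ᵥ α) • aeval A.mulVecLin (∑ i ∈ range k, p i) b) := by
  set q := (b ⬝ᵥ α) • aeval A.mulVecLin (∑ i ∈ range k, p i) b with hq
  have hpq : ∀ i < k, q ⬝ᵥ aeval A.mulVecLin (p i) b = α ⬝ᵥ aeval A.mulVecLin (p i) b := by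
    intro i hi
    rw [hq, map_sum, LinearMap.sum_apply, smul_dotProduct, sum_dotProduct,
      sum_eq_single_of_mem i (mem_range.mpr hi)
        (fun j hj hji => horth j (mem_range.mp hj) i hi hji),
      hnorm i hi, dotProduct_comm α, aeval_mulVecLin_dotProduct_eigenvector hA hα, smul_eq_mul,
      mul_comm]
  have hle : krylov A.mulVecLin b k ≤ LinearMap.ker (dotProductBilin ℝ ℝ (q - α)) := by
    rw [krylov_le_iff_of_degree_eq hdeg]
    intro i hi
    simpa [sub_dotProduct, sub_eq_zero] using hpq i hi
  refine ⟨Submodule.smul_mem _ _ (aeval_mem_krylov ?_), fun y hy => ?_⟩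
  · rw [← mem_degreeLT]
    refine Submodule.sum_mem _ fun i hi => mem_degreeLT.mpr ?_
    rw [hdeg i (mem_range.mp hi)]
    exact_mod_cast mem_range.mp hi
  · simpa [sub_dotProduct, sub_eq_zero] using hle hy

end OrthogonalProjection

section Distance

variable {V : Type*} {G : SimpleGraph V} {u v w : V} {k : ℕ}

theorem dist_le_dist_add_one_of_adj (h : G.Adj v w) : G.dist u w ≤ G.dist u v + 1 := by
  have := h.diff_dist_adj (u := u)
  omega

theorem exists_adj_dist_eq (hv : G.dist u v = k + 1) : ∃ w, G.Adj v w ∧ G.dist u w = k := by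
  rw [SimpleGraph.dist_comm] at hv
  obtain ⟨q, hq⟩ := SimpleGraph.exists_walk_of_dist_ne_zero (hv.trans_ne k.succ_ne_zero)
  rw [hv] at hq
  cases q with
  | nil => simp at hq
  | @cons _ w _ hvw q =>
    refine ⟨w, hvw, ?_⟩
    have hle := SimpleGraph.dist_le q
    have hge := dist_le_dist_add_one_of_adj (u := u) hvw.symm
    rw [SimpleGraph.Walk.length_cons] at hq
    rw [SimpleGraph.dist_comm] at hle hv
    omega

theorem exists_dist_eq_of_le (h : k ≤ G.dist u v) : ∃ w, G.dist u w = k := by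
  induction h using Nat.decreasingInduction with
  | self => exact ⟨v, rfl⟩
  | of_succ k _ ih =>
    obtain ⟨w, hw⟩ := ih
    obtain ⟨x, -, hx⟩ := exists_adj_dist_eq hw
    exact ⟨x, hx⟩

variable [Fintype V] [DecidableRel G.Adj] {x : V → ℝ}

theorem adjMatrix_mulVec_apply_eq_zero (h : ∀ w, G.Adj v w → x w = 0) :
    (G.adjMatrix ℝ *ᵥ x) v = 0 := by
  rw [SimpleGraph.adjMatrix_mulVec_apply]
  exact sum_eq_zero fun w hw => h w (by simpa using hw)

theorem adjMatrix_mulVecLin_pow_apply_eq_zero {m : ℕ}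
    (hx : ∀ v, G.dist u v < k + m → x v = 0) (hv : G.dist u v < k) :
    (((G.adjMatrix ℝ).mulVecLin ^ m) x) v = 0 := by
  induction m generalizing v k with
  | zero => simpa using hx v hv
  | succ m ih =>
    rw [pow_succ', Module.End.mul_apply, mulVecLin_apply]
    refine adjMatrix_mulVec_apply_eq_zero fun w hvw =>
      ih (k := k + 1) (fun z hz => hx z (by omega)) ?_
    have := dist_le_dist_add_one_of_adj (u := u) hvw
    omega

end Distance

section LocalKrylov

variable {V : Type*} [Fintype V] [DecidableEq V] {G : SimpleGraph V} [DecidableRel G.Adj]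
  {u v : V} {k : ℕ} {x y : V → ℝ}

/-- The local Krylov space at a vertex `u`: the vectors `f(A) e_u` with `deg f < k`, where `A` is
the adjacency matrix. The `u`-local scalar product of polynomials is the dot product of these
vectors. -/
noncomputable abbrev localKrylov (G : SimpleGraph V) [DecidableRel G.Adj] (u : V) (k : ℕ) :
    Submodule ℝ (V → ℝ) :=
  krylov (G.adjMatrix ℝ).mulVecLin (Pi.single u 1) k

theorem adjMatrix_mulVecLin_pow_single_apply_eq_zero (hv : k < G.dist u v) :
    (((G.adjMatrix ℝ).mulVecLin ^ k) (Pi.single u 1)) v = 0 := by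
  induction k generalizing v with
  | zero =>
    have hvu : v ≠ u := by
      rintro rfl
      simp at hv
    simp [hvu]
  | succ k ih =>
    rw [pow_succ', Module.End.mul_apply, mulVecLin_apply]
    refine adjMatrix_mulVec_apply_eq_zero fun w hvw => ih ?_
    have := dist_le_dist_add_one_of_adj (u := u) hvw.symm
    omega

theorem apply_eq_zero_of_mem_localKrylov (hx : x ∈ localKrylov G u k) (hv : k ≤ G.dist u v) :
    x v = 0 := by
  suffices localKrylov G u k ≤ LinearMap.ker (LinearMap.proj v) from this hx
  exact krylov_le_iff.mpr fun i hi =>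
    adjMatrix_mulVecLin_pow_single_apply_eq_zero (hi.trans_le hv)

theorem dotProduct_eq_zero_of_mem_localKrylov (hx : x ∈ localKrylov G u k)
    (hy : ∀ v, G.dist u v < k → y v = 0) : y ⬝ᵥ x = 0 := by
  refine sum_eq_zero fun v _ => ?_
  rcases lt_or_ge (G.dist u v) k with hv | hv
  · rw [hy v hv, zero_mul]
  · rw [apply_eq_zero_of_mem_localKrylov hx hv, mul_zero]

variable {N : ℕ} {r : V → ℝ}

theorem exists_mem_localKrylov_supported
    (hK : ∀ k, localKrylov G u k ≤ localKrylov G u (N + 1)) (hr : r ∈ localKrylov G u (N + 1))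
    (hr_supp : ∀ v, G.dist u v < N → r v = 0) (hr_ne : r ≠ 0) (hk : k ≤ N) :
    ∃ z ∈ localKrylov G u (N + 1), (∀ v, G.dist u v < k → z v = 0) ∧
      z ⬝ᵥ (((G.adjMatrix ℝ).mulVecLin ^ k) (Pi.single u 1)) ≠ 0 := by
  set T := (G.adjMatrix ℝ).mulVecLin
  refine ⟨(T ^ (N - k)) r, Module.End.pow_apply_mem_of_forall_mem _
    (fun x hx => hK _ (apply_mem_krylov_succ hx)) _ hr, fun v hv => ?_, fun h0 => ?_⟩
  · exact adjMatrix_mulVecLin_pow_apply_eq_zero (k := k)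
      (fun v hv => hr_supp v (by omega)) hv
  · have htop : r ⬝ᵥ ((T ^ N) (Pi.single u 1)) = 0 := by
      have hsymm := aeval_mulVecLin_dotProduct_of_isSymm (G.isSymm_adjMatrix (α := ℝ))
        (X ^ (N - k)) r ((T ^ k) (Pi.single u 1))
      simp only [aeval_X_pow] at hsymm
      rwa [hsymm, ← Module.End.mul_apply, ← pow_add, Nat.sub_add_cancel hk] at h0
    have horth : localKrylov G u (N + 1) ≤ LinearMap.ker (dotProductBilin ℝ ℝ r) := by
      refine krylov_le_iff.mpr fun i hi => ?_
      rcases (Nat.lt_succ_iff.mp hi).eq_or_lt with rfl | hi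
      · exact htop
      · exact dotProduct_eq_zero_of_mem_localKrylov (krylov_le_iff.mp le_rfl i hi) hr_supp
    exact hr_ne (dotProduct_self_eq_zero.mp (horth hr))

/-- Descending induction on `k`: for `z` as in `exists_mem_localKrylov_supported`, a suitable
`y - c z` is orthogonal to the next Krylov space. -/
theorem apply_eq_zero_of_orthogonal_localKrylov
    (hK : ∀ k, localKrylov G u k ≤ localKrylov G u (N + 1)) (hr : r ∈ localKrylov G u (N + 1))
    (hr_supp : ∀ v, G.dist u v < N → r v = 0) (hr_ne : r ≠ 0)
    (hy : y ∈ localKrylov G u (N + 1)) (horth : ∀ x ∈ localKrylov G u k, y ⬝ᵥ x = 0)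
    (hv : G.dist u v < k) : y v = 0 := by
  rcases le_total (N + 1) k with hk | hk
  · rw [dotProduct_self_eq_zero.mp (horth y (krylov_mono hk hy)), Pi.zero_apply]
  induction hk using Nat.decreasingInduction generalizing y with
  | self => rw [dotProduct_self_eq_zero.mp (horth y hy), Pi.zero_apply]
  | of_succ k hk ih =>
    obtain ⟨z, hz, hz_supp, hz_ne⟩ :=
      exists_mem_localKrylov_supported hK hr hr_supp hr_ne (Nat.lt_succ_iff.mp hk)
    set b := ((G.adjMatrix ℝ).mulVecLin ^ k) (Pi.single u 1)
    let c := (y ⬝ᵥ b) / (z ⬝ᵥ b)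
    have hsub : localKrylov G u (k + 1) ≤ LinearMap.ker (dotProductBilin ℝ ℝ (y - c • z)) := by
      refine krylov_le_iff.mpr fun i hi => ?_
      rw [LinearMap.mem_ker, dotProductBilin_apply_apply, sub_dotProduct, smul_dotProduct]
      rcases (Nat.lt_succ_iff.mp hi).eq_or_lt with rfl | hi
      · simp [c, b, hz_ne]
      · have hmem := krylov_le_iff.mp (le_refl (localKrylov G u k)) i hi
        rw [horth _ hmem, dotProduct_eq_zero_of_mem_localKrylov hmem hz_supp, smul_zero, sub_zero]
    have hyz := ih (sub_mem hy (Submodule.smul_mem _ c hz)) (fun x hx => hsub hx)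
      (hv.trans k.lt_succ_self)
    simpa [hz_supp v hv] using hyz

end LocalKrylov

section Radial

variable {V : Type*} {G : SimpleGraph V} {α : V → ℝ} {u v w : V} {i k : ℕ} {x : V → ℝ}

/-- The restriction of `α` to the sphere of radius `i` around `u`; in the paper's notation
`ρ_U` for `U = Γ_i(u)`. -/
noncomputable def sphereVec (G : SimpleGraph V) (α : V → ℝ) (u : V) (i : ℕ) : V → ℝ :=
  fun v => if G.dist u v = i then α v else 0

/-- The restriction of `α` to the vertices at distance less than `k` from `u`; in the paper's
notation `ρ_U` for `U = N_{k-1}(u)`. The strict inequality matches `deg f < k` in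
`localKrylov`. -/
noncomputable def ballVec (G : SimpleGraph V) (α : V → ℝ) (u : V) (k : ℕ) : V → ℝ :=
  fun v => if G.dist u v < k then α v else 0

/-- The vectors `x` such that `x v / α v` depends only on the distance from `u` to `v`. -/
def radial (G : SimpleGraph V) (α : V → ℝ) (u : V) : Submodule ℝ (V → ℝ) where
  carrier := {x | ∃ c : ℕ → ℝ, ∀ v, x v = c (G.dist u v) * α v}
  add_mem' := by
    rintro x y ⟨c, hc⟩ ⟨e, he⟩
    exact ⟨c + e, fun v => by simp [hc, he, add_mul]⟩
  zero_mem' := ⟨0, by simp⟩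
  smul_mem' := by
    rintro a x ⟨c, hc⟩
    exact ⟨a • c, fun v => by simp [hc, mul_assoc]⟩

theorem sphereVec_apply_of_eq (h : G.dist u v = i) : sphereVec G α u i v = α v :=
  if_pos h

theorem sphereVec_apply_of_ne (h : G.dist u v ≠ i) : sphereVec G α u i v = 0 :=
  if_neg h

theorem ballVec_apply_of_lt (h : G.dist u v < k) : ballVec G α u k v = α v :=
  if_pos h

theorem ballVec_apply_of_le (h : k ≤ G.dist u v) : ballVec G α u k v = 0 :=
  if_neg (not_lt.mpr h)

theorem sphereVec_zero [DecidableEq V] (hconn : G.Connected) :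
    sphereVec G α u 0 = Pi.single u (α u) := by
  ext v
  simp only [sphereVec, hconn.dist_eq_zero_iff,
    Pi.single_apply, eq_comm (a := v)]
  split_ifs with h
  · rw [h]
  · rfl

theorem ballVec_zero : ballVec G α u 0 = 0 := by
  ext v
  simp [ballVec]

theorem ballVec_succ (k : ℕ) : ballVec G α u (k + 1) = ballVec G α u k + sphereVec G α u k := by
  ext v
  rcases lt_trichotomy (G.dist u v) k with h | h | h
  · simp [ballVec_apply_of_lt h, ballVec_apply_of_lt (h.trans k.lt_succ_self),
      sphereVec_apply_of_ne h.ne]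
  · simp [ballVec_apply_of_le h.ge, ballVec_apply_of_lt (h.trans_lt k.lt_succ_self),
      sphereVec_apply_of_eq h]
  · simp [ballVec_apply_of_le h.le, ballVec_apply_of_le h, sphereVec_apply_of_ne h.ne']

theorem sphereVec_mem_radial (i : ℕ) : sphereVec G α u i ∈ radial G α u :=
  ⟨Pi.single i 1, fun v => by simp [sphereVec, Pi.single_apply]⟩

theorem mem_radial_iff (hα : ∀ v, α v ≠ 0) :
    x ∈ radial G α u ↔ ∀ v w, G.dist u v = G.dist u w → x v / α v = x w / α w := by
  have hfactor := Function.factorsThrough_iff (f := G.dist u) (fun v => x v / α v)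
  calc x ∈ radial G α u
      ↔ ∃ c : ℕ → ℝ, (fun v => x v / α v) = c ∘ G.dist u := by
        simp only [radial, Submodule.mem_mk, funext_iff, Function.comp_apply, div_eq_iff (hα _)]
        rfl
    _ ↔ ∀ v w, G.dist u v = G.dist u w → x v / α v = x w / α w := hfactor.symm

theorem eq_sum_smul_sphereVec {c : ℕ → ℝ} (hc : ∀ v, x v = c (G.dist u v) * α v)
    (hx : ∀ v, k ≤ G.dist u v → x v = 0) : x = ∑ j ∈ range k, c j • sphereVec G α u j := by
  ext v
  simp only [Finset.sum_apply, Pi.smul_apply, smul_eq_mul, sphereVec, mul_ite, mul_zero,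
    sum_ite_eq, mem_range]
  split_ifs with hv
  · exact hc v
  · exact hx v (not_lt.mp hv)

variable [Fintype V] [DecidableRel G.Adj]

theorem adjMatrix_mulVec_sphereVec_eq_zero (h : G.dist u v + 1 < i ∨ i + 1 < G.dist u v) :
    (G.adjMatrix ℝ *ᵥ sphereVec G α u i) v = 0 := by
  refine adjMatrix_mulVec_apply_eq_zero fun w hvw => sphereVec_apply_of_ne ?_
  have := dist_le_dist_add_one_of_adj (u := u) hvw
  have := dist_le_dist_add_one_of_adj (u := u) hvw.symm
  omega

theorem adjMatrix_mulVec_sphereVec_pos (hα : ∀ v, 0 < α v) (hvw : G.Adj v w)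
    (hw : G.dist u w = i) : 0 < (G.adjMatrix ℝ *ᵥ sphereVec G α u i) v := by
  rw [SimpleGraph.adjMatrix_mulVec_apply]
  refine sum_pos' (fun x _ => ?_) ⟨w, by simpa using hvw, ?_⟩
  · rw [sphereVec]
    split_ifs
    exacts [(hα x).le, le_rfl]
  · rw [sphereVec_apply_of_eq hw]
    exact hα w

variable [DecidableEq V]

theorem adjMatrix_mulVec_sphereVec (i : ℕ) (v : V) :
    (G.adjMatrix ℝ *ᵥ sphereVec G α u i) v = ∑ w ∈ sphere G u i ∩ G.neighborFinset v, α w := by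
  simp [SimpleGraph.adjMatrix_mulVec_apply, inter_comm, sphere, inter_filter, sum_filter, sphereVec]

theorem isPDRAround_iff (hα : ∀ v, α v ≠ 0) :
    IsPDRAround G α u ↔ ∀ i, G.adjMatrix ℝ *ᵥ sphereVec G α u i ∈ radial G α u := by
  simp only [IsPDRAround, mem_radial_iff hα, ← adjMatrix_mulVec_sphereVec, one_div_mul_eq_div]
  refine ⟨fun h i v w hvw => ?_, fun h i v w hv hw => ?_⟩
  · by_cases hfar : G.dist u v + 1 < i ∨ i + 1 < G.dist u v
    · rw [adjMatrix_mulVec_sphereVec_eq_zero hfar,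
        adjMatrix_mulVec_sphereVec_eq_zero (hvw ▸ hfar), zero_div, zero_div]
    · obtain ⟨hc, ha, hb⟩ := h _ v w rfl hvw.symm
      obtain rfl | rfl | rfl :
          i = G.dist u v - 1 ∨ i = G.dist u v ∨ i = G.dist u v + 1 := by omega
      exacts [hc, ha, hb]
  · have hvw := hv.trans hw.symm
    exact ⟨h _ v w hvw, h _ v w hvw, h _ v w hvw⟩

end Radial

section PseudoDistanceRegular

variable {V : Type*} [Fintype V] [DecidableEq V] {G : SimpleGraph V} [DecidableRel G.Adj]
  {α : V → ℝ} {u : V} {k N : ℕ}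

theorem sphereVec_mem_localKrylov_of_isPDRAround (hconn : G.Connected) (hα : ∀ v, 0 < α v)
    (h : IsPDRAround G α u) (i : ℕ) : sphereVec G α u i ∈ localKrylov G u (i + 1) := by
  rw [isPDRAround_iff fun v => (hα v).ne'] at h
  induction i using Nat.strong_induction_on with
  | _ i ih =>
  rcases i with _ | i
  · exact mem_krylov.mpr ⟨C (α u), degree_C_le.trans_lt (by simp), by
      simp [sphereVec_zero hconn, ← Pi.single_smul]⟩
  by_cases hne : ∃ v, G.dist u v = i + 1
  · obtain ⟨v, hv⟩ := hne
    obtain ⟨c, hc⟩ := h i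
    have hci : c (i + 1) ≠ 0 := fun h0 => by
      obtain ⟨w, hvw, hw⟩ := exists_adj_dist_eq hv
      have hpos := adjMatrix_mulVec_sphereVec_pos hα hvw hw
      rw [hc v, hv, h0, zero_mul] at hpos
      exact hpos.false
    have hsum := eq_sum_smul_sphereVec (k := i + 2) hc fun v hv =>
      adjMatrix_mulVec_sphereVec_eq_zero (Or.inr (by omega))
    rw [sum_range_succ, ← sub_eq_iff_eq_add'] at hsum
    rw [← Submodule.smul_mem_iff _ hci, ← hsum]
    refine sub_mem (apply_mem_krylov_succ (ih i i.lt_succ_self))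
      (Submodule.sum_mem _ fun j hj => Submodule.smul_mem _ _ ?_)
    exact krylov_mono (Nat.succ_le_succ (mem_range.mp hj).le) (ih j (mem_range.mp hj))
  · have hzero : sphereVec G α u (i + 1) = 0 :=
      funext fun v => sphereVec_apply_of_ne fun hv => hne ⟨v, hv⟩
    exact hzero ▸ zero_mem _

theorem ballVec_mem_localKrylov_of_isPDRAround (hconn : G.Connected) (hα : ∀ v, 0 < α v)
    (h : IsPDRAround G α u) (k : ℕ) : ballVec G α u k ∈ localKrylov G u k := by
  induction k with
  | zero => exact ballVec_zero (G := G) ▸ zero_mem _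
  | succ k ih =>
    rw [ballVec_succ]
    exact add_mem (krylov_mono k.le_succ ih)
      (sphereVec_mem_localKrylov_of_isPDRAround hconn hα h k)

/-- The vector is the projection of `α`: on the ball, `α` agrees with its projection because the
difference is orthogonal to the Krylov space. -/
theorem ballVec_mem_localKrylov_of_top
    (hK : ∀ k, localKrylov G u k ≤ localKrylov G u (N + 1)) (hα : α ∈ localKrylov G u (N + 1))
    (hαN : α ∉ localKrylov G u N) (hball : ballVec G α u N ∈ localKrylov G u N)
    (k : ℕ) : ballVec G α u k ∈ localKrylov G u k := by
  have hr : α - ballVec G α u N ∈ localKrylov G u (N + 1) := sub_mem hα (hK N hball)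
  have hr_supp (v : V) (hv : G.dist u v < N) : (α - ballVec G α u N) v = 0 := by
    simp [ballVec_apply_of_lt hv]
  have hr_ne : α - ballVec G α u N ≠ 0 := fun h0 => hαN (sub_eq_zero.mp h0 ▸ hball)
  obtain ⟨x, hx, hxα⟩ := exists_isOrthProj (localKrylov G u k) α
  suffices ballVec G α u k = x from this ▸ hx
  ext v
  rcases lt_or_ge (G.dist u v) k with hv | hv
  · have horth (y : V → ℝ) (hy : y ∈ localKrylov G u k) : (α - x) ⬝ᵥ y = 0 := by
      rw [sub_dotProduct, hxα y hy, sub_self]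
    have hαx : (α - x) v = 0 := apply_eq_zero_of_orthogonal_localKrylov hK hr hr_supp hr_ne
      (sub_mem hα (hK k hx)) horth hv
    rw [ballVec_apply_of_lt hv, ← sub_eq_zero, ← Pi.sub_apply, hαx]
  · rw [ballVec_apply_of_le hv, apply_eq_zero_of_mem_localKrylov hx hv]

theorem sphereVec_mem_localKrylov (hk : ballVec G α u k ∈ localKrylov G u k)
    (hk_succ : ballVec G α u (k + 1) ∈ localKrylov G u (k + 1)) :
    sphereVec G α u k ∈ localKrylov G u (k + 1) := by
  rw [ballVec_succ] at hk_succ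
  exact (Submodule.add_mem_iff_right _ (krylov_mono k.le_succ hk)).mp hk_succ

theorem localKrylov_le_radial (hα : ∀ v, α v ≠ 0) (hN : ∀ i < N, ∃ v, G.dist u v = i)
    (hball : ∀ k ≤ N, ballVec G α u k ∈ localKrylov G u k) :
    localKrylov G u N ≤ radial G α u := by
  have hsphere : ∀ i < N, ∃ f : ℝ[X], f.degree = i ∧
      aeval (G.adjMatrix ℝ).mulVecLin f (Pi.single u 1) = sphereVec G α u i := by
    intro i hi
    obtain ⟨f, hdeg, hf⟩ := mem_krylov.mp (sphereVec_mem_localKrylov (hball i hi.le) (hball _ hi))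
    refine ⟨f, le_antisymm (Order.lt_succ_iff.mp hdeg) (not_lt.mp fun hlt => ?_), hf⟩
    obtain ⟨v, hv⟩ := hN i hi
    apply hα v
    rw [← sphereVec_apply_of_eq (α := α) hv, ← hf]
    exact apply_eq_zero_of_mem_localKrylov (aeval_mem_krylov hlt) hv.ge
  choose! f hdeg hf using hsphere
  rw [localKrylov, krylov_le_iff_of_degree_eq hdeg]
  exact fun i hi => hf i hi ▸ sphereVec_mem_radial i

theorem ballVec_mem_localKrylov_iff (hconn : G.Connected) (hpos : ∀ v, 0 < α v)
    (hK : ∀ k, localKrylov G u k ≤ localKrylov G u (N + 1)) (hα : α ∈ localKrylov G u (N + 1))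
    (hαN : α ∉ localKrylov G u N) :
    ballVec G α u N ∈ localKrylov G u N ↔
      univ.sup (fun v => G.dist u v) = N ∧ IsPDRAround G α u := by
  refine ⟨fun hball => ?_, fun h => ballVec_mem_localKrylov_of_isPDRAround hconn hpos h.2 N⟩
  have hle (v : V) : G.dist u v ≤ N := not_lt.mp fun hv =>
    (hpos v).ne' (apply_eq_zero_of_mem_localKrylov hα hv)
  obtain ⟨v, hv⟩ : ∃ v, N ≤ G.dist u v := by
    by_contra! hlt
    exact hαN ((funext fun v => ballVec_apply_of_lt (hlt v) : ballVec G α u N = α) ▸ hball)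
  have hballs := ballVec_mem_localKrylov_of_top hK hα hαN hball
  have hradial : localKrylov G u (N + 1) ≤ radial G α u :=
    localKrylov_le_radial (fun v => (hpos v).ne')
      (fun i hi => exists_dist_eq_of_le ((Nat.lt_succ_iff.mp hi).trans hv)) fun k _ => hballs k
  refine ⟨le_antisymm (Finset.sup_le fun v _ => hle v)
    (hv.trans (Finset.le_sup (f := fun v => G.dist u v) (mem_univ v))),
    (isPDRAround_iff fun v => (hpos v).ne').mpr fun i => hradial ?_⟩
  exact hK _ (apply_mem_krylov_succ (sphereVec_mem_localKrylov (hballs i) (hballs _)))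

end PseudoDistanceRegular

section ScalarProduct

theorem ballVec_dotProduct_self {V : Type*} [Fintype V] {G : SimpleGraph V} {α : V → ℝ} {u : V}
    {k : ℕ} :
    ballVec G α u k ⬝ᵥ ballVec G α u k = ∑ v with G.dist u v < k, α v ^ 2 := by
  rw [sum_filter]
  refine sum_congr rfl fun v _ => ?_
  rw [ballVec]
  split_ifs <;> ring

variable {V : Type*} [Fintype V] [DecidableEq V] {G : SimpleGraph V} [DecidableRel G.Adj]
  {α : V → ℝ} {μ : ℝ} {u : V} {k : ℕ}

theorem ballVec_dotProduct_of_mem_localKrylov {y : V → ℝ} (hy : y ∈ localKrylov G u k) :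
    ballVec G α u k ⬝ᵥ y = α ⬝ᵥ y := by
  rw [← sub_eq_zero, ← sub_dotProduct]
  exact dotProduct_eq_zero_of_mem_localKrylov hy fun v hv => by simp [ballVec_apply_of_lt hv]

theorem eval_div_sqrt_eq_iff_ballVec_mem (hu : 0 < α u) (hα : G.adjMatrix ℝ *ᵥ α = μ • α)
    {f : ℝ[X]} {x : V → ℝ} (hf : aeval (G.adjMatrix ℝ).mulVecLin f (Pi.single u 1) = x)
    (hx : IsOrthProj (localKrylov G u k) α (α u • x)) :
    f.eval μ / √(x ⬝ᵥ x) = 1 / α u * √(∑ v with G.dist u v < k, α v ^ 2) ↔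
      ballVec G α u k ∈ localKrylov G u k := by
  have heval : f.eval μ = x ⬝ᵥ x := by
    have hproj := hx.2 x ((Submodule.smul_mem_iff _ hu.ne').mp hx.1)
    rw [dotProduct_comm α, ← hf, aeval_mulVecLin_dotProduct_eigenvector G.isSymm_adjMatrix hα, hf,
      single_one_dotProduct, smul_dotProduct, smul_eq_mul, mul_comm] at hproj
    exact (mul_right_cancel₀ hu.ne' hproj).symm
  have hball : IsOrthProj (localKrylov G u k) (ballVec G α u k) (α u • x) :=
    hx.congr fun y hy => (ballVec_dotProduct_of_mem_localKrylov hy).symm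
  calc f.eval μ / √(x ⬝ᵥ x) = 1 / α u * √(∑ v with G.dist u v < k, α v ^ 2)
      ↔ √((α u • x) ⬝ᵥ (α u • x)) = √(ballVec G α u k ⬝ᵥ ballVec G α u k) := by
        rw [heval, Real.div_sqrt, ballVec_dotProduct_self, smul_dotProduct, dotProduct_smul,
          smul_smul, smul_eq_mul, Real.sqrt_mul (by positivity), Real.sqrt_mul_self hu.le,
          one_div, eq_inv_mul_iff_mul_eq₀ hu.ne']
    _ ↔ (α u • x) ⬝ᵥ (α u • x) = ballVec G α u k ⬝ᵥ ballVec G α u k :=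
        Real.sqrt_inj (sum_nonneg fun v _ => mul_self_nonneg _)
          (sum_nonneg fun v _ => mul_self_nonneg _)
    _ ↔ ballVec G α u k ∈ localKrylov G u k := hball.dotProduct_self_eq_iff

end ScalarProduct

section SpectralDecomposition

variable {n : Type*} [Fintype n]

theorem diag_nonneg_of_isSymm_of_isIdempotentElem {E : Matrix n n ℝ} (hsym : E.IsSymm)
    (hE : IsIdempotentElem E) (i : n) : 0 ≤ E i i := by
  rw [← hE.eq, mul_apply]
  exact sum_nonneg fun j _ => by rw [hsym.apply]; exact mul_self_nonneg _

variable [DecidableEq n]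

theorem aeval_mulVecLin_eq_sum {ι R : Type*} [CommRing R] {A : Matrix n n R} {s : Finset ι}
    {lam : ι → R} {E : ι → Matrix n n R} (hsum : ∑ i ∈ s, E i = 1)
    (heig : ∀ i ∈ s, A * E i = lam i • E i) (f : R[X]) (b : n → R) :
    aeval A.mulVecLin f b = ∑ i ∈ s, f.eval (lam i) • (E i *ᵥ b) := by
  conv_lhs => rw [← one_mulVec b, ← hsum, sum_mulVec, map_sum]
  refine sum_congr rfl fun i hi => Module.End.aeval_apply_of_mem_apply_eq_smul ?_
  rw [mulVecLin_apply, mulVec_mulVec, heig i hi, smul_mulVec]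

variable {A : Matrix n n ℝ} {s : Finset ℕ} {lam : ℕ → ℝ} {E : ℕ → Matrix n n ℝ}

theorem aeval_single_dotProduct_aeval_single (hA : A.IsSymm) (hsum : ∑ i ∈ s, E i = 1)
    (heig : ∀ i ∈ s, A * E i = lam i • E i) (u : n) (f g : ℝ[X]) :
    aeval A.mulVecLin f (Pi.single u 1) ⬝ᵥ aeval A.mulVecLin g (Pi.single u 1) =
      discInner s lam (fun i => E i u u) f g := by
  rw [aeval_mulVecLin_dotProduct_of_isSymm hA, ← Module.End.mul_apply, ← map_mul,
    aeval_mulVecLin_eq_sum hsum heig, discInner, dotProduct_sum]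
  refine sum_congr rfl fun i _ => ?_
  rw [dotProduct_smul, single_one_dotProduct, mulVec_single_one, col_apply, eval_mul, smul_eq_mul]
  ring

theorem aeval_single_eq_zero_iff (hA : A.IsSymm) (hsum : ∑ i ∈ s, E i = 1)
    (heig : ∀ i ∈ s, A * E i = lam i • E i) {u : n} (hE : ∀ i ∈ s, 0 ≤ E i u u) (f : ℝ[X]) :
    aeval A.mulVecLin f (Pi.single u 1) = 0 ↔
      ∀ i ∈ s.filter fun i => E i u u ≠ 0, f.eval (lam i) = 0 := by
  rw [← dotProduct_self_eq_zero, aeval_single_dotProduct_aeval_single hA hsum heig, discInner,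
    sum_eq_zero_iff_of_nonneg]
  · simp [mul_assoc, or_iff_not_imp_left]
  · intro i hi
    rw [mul_assoc]
    exact mul_nonneg (hE i hi) (mul_self_nonneg _)

end SpectralDecomposition

section LocalSpectrum

variable {ι R M : Type*} [CommRing R] [AddCommGroup M] [Module R M] {T : Module.End R M} {b : M}
  {s : Finset ι} {lam : ι → R}

theorem krylov_le_krylov_card [Nontrivial R]
    (hker : ∀ f : R[X], aeval T f b = 0 ↔ ∀ i ∈ s, f.eval (lam i) = 0) (k : ℕ) :
    krylov T b k ≤ krylov T b s.card := by
  intro x hx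
  obtain ⟨f, -, rfl⟩ := mem_krylov.mp hx
  have hm := (hker (∏ i ∈ s, (X - C (lam i)))).mpr fun i hi => by
    rw [eval_prod]
    exact prod_eq_zero hi (by simp)
  simpa using aeval_apply_mem_krylov_natDegree
    (monic_prod_of_monic _ _ fun i _ => monic_X_sub_C (lam i)) hm f

theorem apply_aeval_prod_erase [DecidableEq ι]
    (hker : ∀ f : R[X], aeval T f b = 0 ↔ ∀ i ∈ s, f.eval (lam i) = 0) (i₀ : ι) :
    T (aeval T (∏ i ∈ s.erase i₀, (X - C (lam i))) b) =
      lam i₀ • aeval T (∏ i ∈ s.erase i₀, (X - C (lam i))) b := by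
  have h := (hker ((X - C (lam i₀)) * ∏ i ∈ s.erase i₀, (X - C (lam i)))).mpr fun i hi => by
    rw [eval_mul, eval_prod]
    rcases eq_or_ne i i₀ with rfl | hne
    · simp
    · rw [prod_eq_zero (mem_erase.mpr ⟨hne, hi⟩) (by simp), mul_zero]
  simpa [sub_eq_zero] using h

theorem eigenvector_notMem_krylov [IsDomain R]
    (hker : ∀ f : R[X], aeval T f b = 0 ↔ ∀ i ∈ s, f.eval (lam i) = 0) (hinj : Set.InjOn lam s)
    {k : ℕ} (hk : k < s.card) {μ : R} {x : M} (hx : T x = μ • x) (hx0 : x ≠ 0) :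
    x ∉ krylov T b k := by
  intro hmem
  obtain ⟨f, hf, rfl⟩ := mem_krylov.mp hmem
  have hkill : aeval T ((X - C μ) * f) b = 0 := by simp [hx]
  have hdeg : ((X - C μ) * f).degree < (s.card : WithBot ℕ) := by
    rw [degree_mul, degree_X_sub_C, add_comm]
    refine (WithBot.add_lt_add_right WithBot.one_ne_bot hf).trans_le ?_
    exact_mod_cast hk
  have hzero := eq_zero_of_degree_lt_of_eval_index_eq_zero _ hinj hdeg ((hker _).mp hkill)
  rcases mul_eq_zero.mp hzero with h | h
  · exact X_sub_C_ne_zero μ h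
  · simp [h] at hx0

end LocalSpectrum

section Perron

variable {V 𝕜 : Type*} [Fintype V] {G : SimpleGraph V} [DecidableRel G.Adj] [Field 𝕜]
  [LinearOrder 𝕜] [IsStrictOrderedRing 𝕜] {μ : 𝕜} {α x : V → 𝕜}

theorem eq_zero_of_nonneg_eigenvector (hconn : G.Connected) (hx : ∀ v, 0 ≤ x v)
    (heig : G.adjMatrix 𝕜 *ᵥ x = μ • x) {v₀ : V} (hv₀ : x v₀ = 0) : x = 0 := by
  have hadj (v w : V) (hvw : G.Adj v w) (hv : x v = 0) : x w = 0 := by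
    have h := congrFun heig v
    rw [SimpleGraph.adjMatrix_mulVec_apply, Pi.smul_apply, hv, smul_zero,
      sum_eq_zero_iff_of_nonneg fun w _ => hx w] at h
    exact h w (by simpa using hvw)
  funext v
  obtain ⟨p⟩ := hconn.preconnected v₀ v
  induction p with
  | nil => exact hv₀
  | cons h _ ih => exact ih (hadj _ _ h hv₀)

theorem exists_eq_smul_of_pos_eigenvector (hconn : G.Connected) (hpos : ∀ v, 0 < α v)
    (hα : G.adjMatrix 𝕜 *ᵥ α = μ • α) (hx : G.adjMatrix 𝕜 *ᵥ x = μ • x) :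
    ∃ c : 𝕜, x = c • α := by
  have := hconn.nonempty
  obtain ⟨v₀, hv₀⟩ := Finite.exists_min fun v => x v / α v
  refine ⟨x v₀ / α v₀, sub_eq_zero.mp (eq_zero_of_nonneg_eigenvector (μ := μ) (v₀ := v₀) hconn
    (fun v => ?_) ?_ ?_)⟩
  · simpa using (le_div_iff₀ (hpos v)).mp (hv₀ v)
  · rw [mulVec_sub, mulVec_smul, hα, hx, smul_sub, smul_comm]
  · simp [(hpos v₀).ne']

end Perron

theorem pos_eigenvector_mem_localKrylov {V ι : Type*} [Fintype V] [DecidableEq V]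
    {G : SimpleGraph V} [DecidableRel G.Adj] (hconn : G.Connected) {u : V} {s : Finset ι}
    {lam : ι → ℝ} (hker : ∀ f : ℝ[X],
      aeval (G.adjMatrix ℝ).mulVecLin f (Pi.single u 1) = 0 ↔ ∀ i ∈ s, f.eval (lam i) = 0)
    {i₀ : ι} (hne : ∀ i ∈ s, i ≠ i₀ → lam i ≠ lam i₀) {α : V → ℝ} (hpos : ∀ v, 0 < α v)
    (hα : G.adjMatrix ℝ *ᵥ α = lam i₀ • α) : α ∈ localKrylov G u s.card := by
  classical
  set f : ℝ[X] := ∏ i ∈ s.erase i₀, (X - C (lam i)) with hf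
  obtain ⟨c, hc⟩ := exists_eq_smul_of_pos_eigenvector hconn hpos hα (apply_aeval_prod_erase hker i₀)
  have hc0 : c ≠ 0 := by
    rintro rfl
    have heval := aeval_mulVecLin_dotProduct_eigenvector G.isSymm_adjMatrix hα f (Pi.single u 1)
    rw [hc, zero_smul, zero_dotProduct, single_one_dotProduct, hf, eval_prod] at heval
    refine mul_ne_zero (prod_ne_zero_iff.mpr fun i hi => ?_) (hpos u).ne' heval.symm
    simpa [sub_eq_zero] using (hne i (mem_of_mem_erase hi) (ne_of_mem_erase hi)).symm
  rw [← Submodule.smul_mem_iff _ hc0, ← hc]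
  exact krylov_le_krylov_card hker (f.natDegree + 1)
    (aeval_mem_krylov (degree_le_natDegree.trans_lt (by exact_mod_cast f.natDegree.lt_succ_self)))

/-- Theorem 2.2 (second part): equality
`q_{d_u−1}^u(λ_0)/‖q_{d_u−1}^u‖_u = (1/α_u)·‖ρ_{N_{d_u−1}(u)}‖` holds if and only if
`u` has maximum eccentricity `ecc(u) = d_u` and `Γ` is pseudo-distance-regular
around `u`. -/
theorem stmt_9 {V : Type*} [Fintype V] [DecidableEq V]
    (G : SimpleGraph V) [DecidableRel G.Adj] (hconn : G.Connected)
    (d : ℕ) (lam : ℕ → ℝ) (hlam : StrictAntiOn lam (Set.Iic d))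
    (E : ℕ → Matrix V V ℝ)
    (hsym : ∀ i ≤ d, (E i).IsSymm)
    (hsum : ∑ i ∈ Finset.range (d + 1), E i = 1)
    (hmul : ∀ i ≤ d, ∀ j ≤ d, E i * E j = if i = j then E i else 0)
    (heig : ∀ i ≤ d, G.adjMatrix ℝ * E i = lam i • E i)
    (hnz : ∀ i ≤ d, E i ≠ 0)
    (alpha : V → ℝ) (hapos : ∀ v, 0 < alpha v)
    (haeig : G.adjMatrix ℝ *ᵥ alpha = lam 0 • alpha)
    (hanorm : ∑ v : V, alpha v ^ 2 = (Fintype.card V : ℝ))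
    (u : V) (du : ℕ) (hdu1 : 1 ≤ du)
    (hdu : ((Finset.range (d + 1)).filter (fun i => E i u u ≠ 0)).card = du + 1)
    (p : ℕ → Polynomial ℝ)
    (hpdeg : ∀ i ≤ du, (p i).degree = (i : WithBot ℕ))
    (hporth : ∀ i ≤ du, ∀ j ≤ du, i ≠ j →
      discInner (Finset.range (d + 1)) lam (fun i => E i u u) (p i) (p j) = 0)
    (hpnorm : ∀ i ≤ du,
      discInner (Finset.range (d + 1)) lam (fun i => E i u u) (p i) (p i)
        = (p i).eval (lam 0)) :
    ((∑ i ∈ Finset.range du, p i).eval (lam 0) /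
        Real.sqrt (discInner (Finset.range (d + 1)) lam (fun i => E i u u)
          (∑ i ∈ Finset.range du, p i) (∑ i ∈ Finset.range du, p i))
      = (1 / alpha u) *
          Real.sqrt (∑ v ∈ Finset.univ.filter (fun v => G.dist u v ≤ du - 1),
            alpha v ^ 2))
    ↔ (Finset.univ.sup (fun v => G.dist u v) = du ∧ IsPDRAround G alpha u) := by
  have hmem (i : ℕ) (hi : i ∈ range (d + 1)) : i ≤ d := Nat.lt_succ_iff.mp (mem_range.mp hi)
  have hsymm : (G.adjMatrix ℝ).IsSymm := G.isSymm_adjMatrix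
  have hdot := aeval_single_dotProduct_aeval_single hsymm hsum (fun i hi => heig i (hmem i hi)) u
  have hdiag (i : ℕ) (hi : i ∈ range (d + 1)) : 0 ≤ E i u u :=
    diag_nonneg_of_isSymm_of_isIdempotentElem (hsym i (hmem i hi))
      ((hmul i (hmem i hi) i (hmem i hi)).trans (if_pos rfl)) u
  have hker := aeval_single_eq_zero_iff hsymm hsum (fun i hi => heig i (hmem i hi)) hdiag
  have hlocal (i : ℕ) (hi : i ∈ {i ∈ range (d + 1) | E i u u ≠ 0}) : i ∈ Set.Iic d :=
    hmem i (mem_filter.mp hi).1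
  have halpha := pos_eigenvector_mem_localKrylov hconn hker
    (fun i hi hi0 => hlam.injOn.ne (hlocal i hi) d.zero_le hi0) hapos haeig
  have halpha_notMem := eigenvector_notMem_krylov hker (hlam.injOn.mono hlocal)
    (du.lt_succ_self.trans_eq hdu.symm) haeig (Function.ne_iff.mpr ⟨u, (hapos u).ne'⟩)
  have hK := krylov_le_krylov_card hker
  rw [hdu] at halpha hK
  simp only [← hdot] at hporth hpnorm ⊢
  have hproj := isOrthProj_krylov_sum hsymm haeig (fun i hi => hpdeg i hi.le)
    (fun i hi j hj => hporth i hi.le j hj.le) (fun i hi => hpnorm i hi.le)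
  rw [single_one_dotProduct] at hproj
  rw [← ballVec_mem_localKrylov_iff hconn hapos hK halpha halpha_notMem,
    ← eval_div_sqrt_eq_iff_ballVec_mem (hapos u) haeig rfl hproj]
  simp only [Nat.le_sub_one_iff_lt hdu1]
end

section
/- Let Γ be a connected bipartite (δ_1,δ_2)-semiregular graph on n = n_1 + n_2 vertices with d+1 distinct eigenvalues, and suppose that d is odd or n_1 = n_2. Then Γ is distance-biregular if and only if its average excess equals its spectral excess, i.e., k̄_d = p_d(λ_0), where p_d is the highest-degree predistance polynomial. -/
open Polynomial Finset Matrix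

/-- `Γ` (bipartite with stable sets `V₁, V₂`) is distance-biregular: it is
distance-regular around each vertex, and the intersection numbers
`c_i(u,v) = |Γ_{i−1}(u)∩Γ(v)|` and `b_i(u,v) = |Γ_{i+1}(u)∩Γ(v)|` (for `v ∈ Γ_i(u)`)
depend only on `i` and on the stable set containing `u`. -/
def IsDistBiregularOn {V : Type*} [Fintype V] [DecidableEq V] (G : SimpleGraph V)
    [DecidableRel G.Adj] (V1 V2 : Finset V) : Prop :=
  ∃ c1 b1 c2 b2 : ℕ → ℕ,
    (∀ u ∈ V1, ∀ v : V,
      (sphere G u (G.dist u v - 1) ∩ G.neighborFinset v).card = c1 (G.dist u v) ∧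
      (sphere G u (G.dist u v + 1) ∩ G.neighborFinset v).card = b1 (G.dist u v)) ∧
    (∀ u ∈ V2, ∀ v : V,
      (sphere G u (G.dist u v - 1) ∩ G.neighborFinset v).card = c2 (G.dist u v) ∧
      (sphere G u (G.dist u v + 1) ∩ G.neighborFinset v).card = b2 (G.dist u v))

/-!
Since the adjacency matrix `A` anticommutes with the diagonal sign matrix of the bipartition, the
spectrum is symmetric, so for odd `d` zero is not an eigenvalue; then `A` is invertible and the
sign matrix is traceless, i.e. `n₁ = n₂`. So in either case the two sides have equal size, `Γ` is
regular, and `∑ j, p_j(A) = J`.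

The last identity makes `p_d(A)` equal to `1` at all pairs at distance `d`, whence
`tr (p_d(A) - A_d)² = n (p_d(λ₀) - k̄_d)`: the spectral and average excesses agree iff
`p_d(A) = A_d`. If so, the three-term recurrence, run downwards, gives `p_i(A) = A_i` for every `i`,
and its coefficients are the intersection numbers. Conversely, intersection numbers on one side give
polynomials `q_j` with `q_j(A) = A_j` on the rows of that side. As `tr f(A)` splits evenly between
the two sides, orthogonality on those rows is orthogonality of predistance polynomials, and it
forces `p_d(A) = A_d` on them.
-/

section OrthogonalSystems

variable {K : Type*} [Field K]

lemma span_image_Iio_eq_degreeLT_s11 {p : ℕ → K[X]} {m : ℕ} (hp : ∀ i < m, (p i).degree = i) :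
    Submodule.span K (p '' Set.Iio m) = degreeLT K m := by
  let S : Polynomial.Sequence K := ⟨fun i ↦ if i < m then p i else X ^ i, fun i ↦ by
    split_ifs with hi
    exacts [hp i hi, degree_X_pow i]⟩
  have hpS : p '' Set.Iio m = S '' Set.Iio m := Set.image_congr fun i hi ↦ (if_pos hi).symm
  rw [hpS, S.span_degreeLT fun i _ ↦ (leadingCoeff_ne_zero.mpr (S.ne_zero i)).isUnit]

/-- The polynomials `p 0, …, p d`, with `p i` of degree `i`, are orthogonal and non-isotropic for
the bilinear form `B`. Nothing is asked of `p i` for `i > d`, as `B` may be degenerate there. -/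
structure IsOrthogonalSystem (B : LinearMap.BilinForm K K[X]) (d : ℕ) (p : ℕ → K[X]) : Prop where
  degree_eq : ∀ i ≤ d, (p i).degree = i
  ortho : ∀ i ≤ d, ∀ j ≤ d, i ≠ j → B (p i) (p j) = 0
  self_ne_zero : ∀ i ≤ d, B (p i) (p i) ≠ 0

/-- The coefficient of `p j` in the expansion of `f` in a `B`-orthogonal system `p`. -/
noncomputable def expansionCoeff (B : LinearMap.BilinForm K K[X]) (p : ℕ → K[X]) (f : K[X])
    (j : ℕ) : K :=
  B f (p j) / B (p j) (p j)

namespace IsOrthogonalSystem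

variable {B : LinearMap.BilinForm K K[X]} {d : ℕ} {p : ℕ → K[X]}

lemma mem_span_of_degree_lt (hp : IsOrthogonalSystem B d p) {m : ℕ} (hm : m ≤ d + 1) {f : K[X]}
    (hf : f.degree < m) : f ∈ Submodule.span K (p '' Set.Iio m) := by
  rw [span_image_Iio_eq_degreeLT_s11 fun i hi ↦ hp.degree_eq i (by lia)]
  exact mem_degreeLT.mpr hf

lemma apply_eq_zero_of_degree_lt (hp : IsOrthogonalSystem B d p) {i : ℕ} (hi : i ≤ d) {f : K[X]}
    (hf : f.degree < i) : B (p i) f = 0 := by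
  have hspan : Submodule.span K (p '' Set.Iio i) ≤ (B (p i)).ker :=
    Submodule.span_le.mpr <| Set.image_subset_iff.mpr fun j (hj : j < i) ↦
      hp.ortho i hi j (hj.le.trans hi) hj.ne'
  exact hspan (hp.mem_span_of_degree_lt (by lia) hf)

lemma apply_ne_zero_of_degree_eq (hp : IsOrthogonalSystem B d p) {i : ℕ} (hi : i ≤ d) {f : K[X]}
    (hf : f.degree = i) : B (p i) f ≠ 0 := by
  have hf0 : f ≠ 0 := degree_ne_bot.mp (by simp [hf])
  have hp0 : p i ≠ 0 := degree_ne_bot.mp (by simp [hp.degree_eq i hi])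
  set c := f.leadingCoeff / (p i).leadingCoeff with hc
  have hc0 : c ≠ 0 := div_ne_zero (leadingCoeff_ne_zero.mpr hf0) (leadingCoeff_ne_zero.mpr hp0)
  have hlow : (f - C c * p i).degree < i := by
    rw [← hf]
    refine degree_sub_lt_left ?_ hf0 ?_
    · rw [degree_C_mul hc0, hf, hp.degree_eq i hi]
    · rw [leadingCoeff_mul, leadingCoeff_C, hc, div_mul_cancel₀ _ (leadingCoeff_ne_zero.mpr hp0)]
  have hB := hp.apply_eq_zero_of_degree_lt hi hlow
  rw [map_sub, sub_eq_zero, ← smul_eq_C_mul, map_smul, smul_eq_mul] at hB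
  exact hB ▸ mul_ne_zero hc0 (hp.self_ne_zero i hi)

lemma eq_sum_expansionCoeff_smul (hp : IsOrthogonalSystem B d p) {f : K[X]}
    (hf : f.degree < (d + 1 : ℕ)) : f = ∑ j ∈ range (d + 1), expansionCoeff B p f j • p j := by
  have hspan := hp.mem_span_of_degree_lt le_rfl hf
  clear hf
  induction hspan using Submodule.span_induction with
  | mem f hf =>
    obtain ⟨i, hi, rfl⟩ := hf
    have hi' : i ≤ d := Nat.lt_succ_iff.mp hi
    rw [Finset.sum_eq_single_of_mem i (Finset.mem_range.mpr hi), expansionCoeff,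
      div_self (hp.self_ne_zero i hi'), one_smul]
    intro j hj hji
    rw [expansionCoeff, hp.ortho i hi' j (Finset.mem_range_succ_iff.mp hj) hji.symm, zero_div,
      zero_smul]
  | zero => simp [expansionCoeff]
  | add f g _ _ hf hg =>
    simp only [expansionCoeff, map_add, LinearMap.add_apply, add_div, add_smul,
      Finset.sum_add_distrib] at hf hg ⊢
    rw [← hf, ← hg]
  | smul c f _ hf =>
    simp only [expansionCoeff, map_smul, LinearMap.smul_apply, smul_eq_mul, mul_div_assoc, mul_smul,
      ← Finset.smul_sum] at hf ⊢
    rw [← hf]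

end IsOrthogonalSystem

end OrthogonalSystems

section SpectralResolution

lemma aeval_mul_of_mul_eq_smul {R B : Type*} [CommSemiring R] [Semiring B] [Algebra R B] {a m : B}
    {μ : R} (h : a * m = μ • m) (f : R[X]) : aeval a f * m = f.eval μ • m := by
  have hpow (k : ℕ) : a ^ k * m = μ ^ k • m := by
    induction k with
    | zero => simp
    | succ k ih => rw [pow_succ, mul_assoc, h, mul_smul_comm, ih, smul_smul, pow_succ']
  simp only [aeval_eq_sum_range, eval_eq_sum_range, Finset.sum_mul, Finset.sum_smul,
    smul_mul_assoc, hpow, smul_smul]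

variable {K B ι : Type*} [Field K] [Ring B] [Algebra K B]

/-- The elements `E i` (`i ∈ s`) resolve the identity into eigenspaces of `a` for the distinct
eigenvalues `lam i`. That the `E i` are orthogonal idempotents is a consequence: they are the
Lagrange basis polynomials on the mesh `lam`, evaluated at `a`. -/
structure IsSpectralResolution (a : B) (s : Finset ι) (lam : ι → K) (E : ι → B) : Prop where
  injOn : Set.InjOn lam s
  sum_eq_one : ∑ i ∈ s, E i = 1
  mul_eq_smul : ∀ i ∈ s, a * E i = lam i • E i
  ne_zero : ∀ i ∈ s, E i ≠ 0

namespace IsSpectralResolution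

variable {a : B} {s : Finset ι} {lam : ι → K} {E : ι → B}

lemma aeval_eq_sum (hE : IsSpectralResolution a s lam E) (f : K[X]) :
    aeval a f = ∑ i ∈ s, f.eval (lam i) • E i := by
  rw [← mul_one (aeval a f), ← hE.sum_eq_one, Finset.mul_sum]
  exact Finset.sum_congr rfl fun i hi ↦ aeval_mul_of_mul_eq_smul (hE.mul_eq_smul i hi) f

lemma eq_aeval_basis [DecidableEq ι] (hE : IsSpectralResolution a s lam E) {i : ι} (hi : i ∈ s) :
    E i = aeval a (Lagrange.basis s lam i) := by
  rw [hE.aeval_eq_sum, Finset.sum_eq_single_of_mem i hi, Lagrange.eval_basis_self hE.injOn hi,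
    one_smul]
  intro j hj hji
  rw [Lagrange.eval_basis_of_ne hji.symm hj, zero_smul]

lemma exists_degree_lt_aeval_eq (hE : IsSpectralResolution a s lam E) (f : K[X]) :
    ∃ g : K[X], g.degree < #s ∧ aeval a g = aeval a f := by
  classical
  refine ⟨Lagrange.interpolate s lam fun i ↦ f.eval (lam i),
    Lagrange.degree_interpolate_lt _ hE.injOn, ?_⟩
  rw [hE.aeval_eq_sum, hE.aeval_eq_sum]
  refine Finset.sum_congr rfl fun i hi ↦ ?_
  rw [Lagrange.eval_interpolate_at_node _ hE.injOn hi]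

lemma eq_zero_of_aeval_eq_zero (hE : IsSpectralResolution a s lam E) {f : K[X]}
    (hdeg : f.degree < #s) (hf : aeval a f = 0) : f = 0 := by
  refine eq_zero_of_degree_lt_of_eval_index_eq_zero _ hE.injOn hdeg fun i hi ↦ ?_
  have h := aeval_mul_of_mul_eq_smul (hE.mul_eq_smul i hi) f
  rw [hf, zero_mul, eq_comm, smul_eq_zero] at h
  exact h.resolve_right (hE.ne_zero i hi)

lemma exists_eq_of_mul_eq_smul (hE : IsSpectralResolution a s lam E) {μ : K} {m : B}
    (hm : m ≠ 0) (ham : a * m = μ • m) : ∃ i ∈ s, lam i = μ := by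
  have hnodal : aeval a (Lagrange.nodal s lam) = 0 := by
    rw [hE.aeval_eq_sum]
    refine Finset.sum_eq_zero fun i hi ↦ ?_
    rw [Lagrange.eval_nodal_at_node hi, zero_smul]
  have heval := aeval_mul_of_mul_eq_smul ham (Lagrange.nodal s lam)
  rw [hnodal, zero_mul, eq_comm, smul_eq_zero_iff_left hm, Lagrange.eval_nodal,
    Finset.prod_eq_zero_iff] at heval
  obtain ⟨i, hi, hμ⟩ := heval
  exact ⟨i, hi, (sub_eq_zero.mp hμ).symm⟩

lemma mul_sum_inv_smul (hE : IsSpectralResolution a s lam E) (h0 : ∀ i ∈ s, lam i ≠ 0) :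
    a * ∑ i ∈ s, (lam i)⁻¹ • E i = 1 := by
  rw [← hE.sum_eq_one, Finset.mul_sum]
  refine Finset.sum_congr rfl fun i hi ↦ ?_
  rw [mul_smul_comm, hE.mul_eq_smul i hi, inv_smul_smul₀ (h0 i hi)]

end IsSpectralResolution

end SpectralResolution

section TracePairing

variable {V : Type*} [Fintype V]

lemma eq_zero_of_isSymm_of_trace_mul_self {M : Matrix V V ℝ} (hM : M.IsSymm)
    (h : (M * M).trace = 0) : M = 0 := by
  rw [← Matrix.trace_conjTranspose_mul_self_eq_zero_iff, conjTranspose_eq_transpose_of_trivial,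
    hM.eq, h]

variable [DecidableEq V]

lemma isSymm_aeval {R : Type*} [CommSemiring R] {A : Matrix V V R} (hA : A.IsSymm) (f : R[X]) :
    (aeval A f).IsSymm := by
  induction f using Polynomial.induction_on' with
  | add f g hf hg => simpa only [map_add] using hf.add hg
  | monomial k a =>
    rw [aeval_monomial, ← Algebra.smul_def]
    exact (hA.pow k).smul a

/-- The bilinear form `⟨f, g⟩ = tr (f(A) g(A))` on polynomials: up to the factor `1 / |V|`, the
discrete scalar product on the spectrum of `A` that defines the predistance polynomials. -/
noncomputable def tracePairing {R : Type*} [CommRing R] (A : Matrix V V R) :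
    LinearMap.BilinForm R R[X] :=
  (LinearMap.mul R R[X]).compr₂ (Matrix.traceLinearMap V R R ∘ₗ (aeval A).toLinearMap)

lemma tracePairing_apply {R : Type*} [CommRing R] (A : Matrix V V R) (f g : R[X]) :
    tracePairing A f g = (aeval A f * aeval A g).trace := by
  rw [← map_mul]
  rfl

lemma tracePairing_mul_X {R : Type*} [CommRing R] (A : Matrix V V R) (f g : R[X]) :
    tracePairing A (f * X) g = tracePairing A f (g * X) := by
  rw [tracePairing_apply, tracePairing_apply, ← map_mul, ← map_mul, mul_right_comm, mul_assoc]

variable {A : Matrix V V ℝ} {d : ℕ} {lam : ℕ → ℝ} {E : ℕ → Matrix V V ℝ} {p : ℕ → ℝ[X]}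

lemma discInner_eq_tracePairing_div (hE : IsSpectralResolution A (range (d + 1)) lam E)
    (c : ℝ) (f g : ℝ[X]) :
    discInner (range (d + 1)) lam (fun i ↦ (E i).trace / c) f g = tracePairing A f g / c := by
  rw [tracePairing_apply, ← map_mul, hE.aeval_eq_sum, Matrix.trace_sum, Finset.sum_div, discInner]
  refine Finset.sum_congr rfl fun i _ ↦ ?_
  rw [Matrix.trace_smul, eval_mul, smul_eq_mul]
  ring

lemma isOrthogonalSystem_tracePairing (hA : A.IsSymm)
    (hE : IsSpectralResolution A (range (d + 1)) lam E) (hdeg : ∀ i ≤ d, (p i).degree = i)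
    (hortho : ∀ i ≤ d, ∀ j ≤ d, i ≠ j → tracePairing A (p i) (p j) = 0) :
    IsOrthogonalSystem (tracePairing A) d p where
  degree_eq := hdeg
  ortho := hortho
  self_ne_zero i hi h := by
    rw [tracePairing_apply] at h
    have hlt : (p i).degree < (#(range (d + 1)) : ℕ) := by
      rw [card_range, hdeg i hi]
      exact_mod_cast Nat.lt_succ_of_le hi
    have hp0 : p i = 0 := hE.eq_zero_of_aeval_eq_zero hlt
      (eq_zero_of_isSymm_of_trace_mul_self (isSymm_aeval hA _) h)
    simpa [hp0] using hdeg i hi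

lemma aeval_eq_sum_expansionCoeff_smul (hE : IsSpectralResolution A (range (d + 1)) lam E)
    (hp : IsOrthogonalSystem (tracePairing A) d p) (f : ℝ[X]) :
    aeval A f =
      ∑ j ∈ range (d + 1), expansionCoeff (tracePairing A) p f j • aeval A (p j) := by
  obtain ⟨g, hg, hgf⟩ := hE.exists_degree_lt_aeval_eq f
  rw [card_range] at hg
  have hcoeff (j : ℕ) :
      expansionCoeff (tracePairing A) p f j = expansionCoeff (tracePairing A) p g j := by
    simp only [expansionCoeff, tracePairing_apply, hgf]
  simp only [hcoeff, ← map_smul, ← map_sum, ← hp.eq_sum_expansionCoeff_smul hg, hgf]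

lemma expansionCoeff_mul_X_eq_zero (hp : IsOrthogonalSystem (tracePairing A) d p) {i j : ℕ}
    (hi : i ≤ d) (hji : j + 1 < i) :
    expansionCoeff (tracePairing A) p (p i * X) j = 0 := by
  have hdeg : (p j * X).degree < (i : WithBot ℕ) := by
    rw [degree_mul_X, hp.degree_eq j (by lia)]
    exact_mod_cast hji
  rw [expansionCoeff, tracePairing_mul_X, hp.apply_eq_zero_of_degree_lt hi hdeg, zero_div]

lemma expansionCoeff_succ_mul_X_ne_zero (hp : IsOrthogonalSystem (tracePairing A) d p) {i : ℕ}
    (hi : i < d) : expansionCoeff (tracePairing A) p (p (i + 1) * X) i ≠ 0 := by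
  have hdeg : (p i * X).degree = ((i + 1 : ℕ) : WithBot ℕ) := by
    rw [degree_mul_X, hp.degree_eq i hi.le]
    norm_cast
  rw [expansionCoeff, tracePairing_mul_X]
  exact div_ne_zero (hp.apply_ne_zero_of_degree_eq hi hdeg) (hp.self_ne_zero i hi.le)

end TracePairing

section RegularGraph

lemma allOnes_ne_zero {V : Type*} [Nonempty V] : (of fun _ _ ↦ 1 : Matrix V V ℝ) ≠ 0 := fun h ↦
  one_ne_zero (congrFun₂ h (Classical.arbitrary V) (Classical.arbitrary V))

variable {V : Type*} [Fintype V] {G : SimpleGraph V} [DecidableRel G.Adj] {δ : ℕ}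

lemma adjMatrix_mul_allOnes (hreg : G.IsRegularOfDegree δ) :
    G.adjMatrix ℝ * of (fun _ _ ↦ 1) = (δ : ℝ) • of fun _ _ ↦ (1 : ℝ) := by
  ext u v
  simp [SimpleGraph.adjMatrix_mul_apply, hreg.degree_eq u]

lemma lapMatrix_mul_eq_smul [DecidableEq V] (hreg : G.IsRegularOfDegree δ) {M : Matrix V V ℝ}
    {μ : ℝ} (hM : G.adjMatrix ℝ * M = μ • M) : G.lapMatrix ℝ * M = (δ - μ) • M := by
  have hdeg : G.degMatrix ℝ = (δ : ℝ) • (1 : Matrix V V ℝ) := by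
    simp only [SimpleGraph.degMatrix, hreg.degree_eq, Matrix.smul_one_eq_diagonal]
  rw [SimpleGraph.lapMatrix, hdeg, sub_mul, hM, Matrix.smul_mul, one_mul, sub_smul]

lemma le_degree_of_adjMatrix_mul_eq_smul (hreg : G.IsRegularOfDegree δ) {M : Matrix V V ℝ}
    {μ : ℝ} (hM : G.adjMatrix ℝ * M = μ • M) (hne : M ≠ 0) : μ ≤ δ := by
  classical
  have hpos : 0 ≤ (Mᴴ * (G.lapMatrix ℝ * M)).trace := by
    rw [← mul_assoc]
    exact ((G.posSemidef_lapMatrix (R := ℝ)).conjTranspose_mul_mul_same M).trace_nonneg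
  rw [lapMatrix_mul_eq_smul hreg hM, Matrix.mul_smul, Matrix.trace_smul, smul_eq_mul] at hpos
  have hsq : 0 < (Mᴴ * M).trace :=
    (Matrix.posSemidef_conjTranspose_mul_self M).trace_nonneg.lt_of_ne'
      (Matrix.trace_conjTranspose_mul_self_eq_zero_iff.not.mpr hne)
  exact sub_nonneg.mp (nonneg_of_mul_nonneg_left hpos hsq)

lemma apply_eq_of_adjMatrix_mul_eq_degree_smul (hconn : G.Connected)
    (hreg : G.IsRegularOfDegree δ) {M : Matrix V V ℝ} (hM : G.adjMatrix ℝ * M = (δ : ℝ) • M)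
    (u w v : V) : M u v = M w v := by
  classical
  have hL : G.lapMatrix ℝ * M = 0 := by
    rw [lapMatrix_mul_eq_smul hreg hM, sub_self, zero_smul]
  have hcol : G.lapMatrix ℝ *ᵥ (fun u ↦ M u v) = 0 := funext fun u ↦ congrFun₂ hL u v
  exact G.lapMatrix_mulVec_eq_zero_iff_forall_reachable.mp hcol u w (hconn.preconnected u w)

variable [DecidableEq V] {ι : Type*} {s : Finset ι} {lam : ι → ℝ} {E : ι → Matrix V V ℝ}

lemma eq_degree_of_isGreatest_eigenvalue (hconn : G.Connected) (hreg : G.IsRegularOfDegree δ)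
    (hE : IsSpectralResolution (G.adjMatrix ℝ) s lam E) {i : ι} (hi : i ∈ s)
    (hmax : ∀ j ∈ s, lam j ≤ lam i) : lam i = δ := by
  have := hconn.nonempty
  obtain ⟨j, hj, hjδ⟩ := hE.exists_eq_of_mul_eq_smul allOnes_ne_zero (adjMatrix_mul_allOnes hreg)
  exact (le_degree_of_adjMatrix_mul_eq_smul hreg (hE.mul_eq_smul i hi) (hE.ne_zero i hi)).antisymm
    (hjδ ▸ hmax j hj)

lemma exists_aeval_eq_allOnes (hconn : G.Connected) (hreg : G.IsRegularOfDegree δ)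
    (hE : IsSpectralResolution (G.adjMatrix ℝ) s lam E) :
    ∃ f : ℝ[X], f.degree < #s ∧ aeval (G.adjMatrix ℝ) f = of fun _ _ ↦ 1 := by
  classical
  have := hconn.nonempty
  obtain ⟨i, hi, hiδ⟩ := hE.exists_eq_of_mul_eq_smul allOnes_ne_zero (adjMatrix_mul_allOnes hreg)
  have hEi := hiδ ▸ hE.mul_eq_smul i hi
  have hsymm : (E i).IsSymm := hE.eq_aeval_basis hi ▸ isSymm_aeval G.isSymm_adjMatrix _
  have hconst (u v w z : V) : E i u v = E i w z := by
    rw [apply_eq_of_adjMatrix_mul_eq_degree_smul hconn hreg hEi u z v, ← hsymm.apply z v,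
      apply_eq_of_adjMatrix_mul_eq_degree_smul hconn hreg hEi v w z]
  obtain ⟨v⟩ := hconn.nonempty
  have hne : E i v v ≠ 0 := fun h ↦
    hE.ne_zero i hi (Matrix.ext fun w z ↦ (hconst w z v v).trans h)
  obtain ⟨f, hf, hfE⟩ := hE.exists_degree_lt_aeval_eq ((E i v v)⁻¹ • Lagrange.basis s lam i)
  refine ⟨f, hf, ?_⟩
  rw [hfE, map_smul, ← hE.eq_aeval_basis hi]
  ext w z
  rw [Matrix.smul_apply, hconst w z v v, smul_eq_mul, inv_mul_cancel₀ hne, Matrix.of_apply]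

lemma adjMatrix_aeval_apply_eq_zero {f : ℝ[X]} {u v : V} (hf : f.degree < G.dist u v) :
    aeval (G.adjMatrix ℝ) f u v = 0 := by
  rw [aeval_eq_sum_range, Matrix.sum_apply]
  refine Finset.sum_eq_zero fun k _ ↦ ?_
  rw [Matrix.smul_apply, SimpleGraph.adjMatrix_pow_apply_eq_card_walk]
  rcases lt_or_ge k (G.dist u v) with hk | hk
  · have : IsEmpty {w : G.Walk u v | w.length = k} :=
      ⟨fun ⟨w, hw⟩ ↦ (hw ▸ hk).not_ge (G.dist_le w)⟩
    simp
  · rw [coeff_eq_zero_of_degree_lt (hf.trans_le (by exact_mod_cast hk)), zero_smul]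

lemma dist_lt_card_eigenvalues (hconn : G.Connected) (hreg : G.IsRegularOfDegree δ)
    (hE : IsSpectralResolution (G.adjMatrix ℝ) s lam E) (u v : V) : G.dist u v < #s := by
  obtain ⟨f, hf, hfJ⟩ := exists_aeval_eq_allOnes hconn hreg hE
  by_contra! h
  have huv := adjMatrix_aeval_apply_eq_zero (hf.trans_le (by exact_mod_cast h))
  rw [hfJ] at huv
  exact one_ne_zero huv

lemma sum_aeval_eq_allOnes {d : ℕ} {lam : ℕ → ℝ} {E : ℕ → Matrix V V ℝ} {p : ℕ → ℝ[X]}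
    (hconn : G.Connected) (hreg : G.IsRegularOfDegree δ)
    (hE : IsSpectralResolution (G.adjMatrix ℝ) (range (d + 1)) lam E)
    (hp : IsOrthogonalSystem (tracePairing (G.adjMatrix ℝ)) d p)
    (hnorm : ∀ j ≤ d, tracePairing (G.adjMatrix ℝ) (p j) (p j) =
      Fintype.card V * (p j).eval (δ : ℝ)) :
    ∑ j ∈ range (d + 1), aeval (G.adjMatrix ℝ) (p j) = of fun _ _ ↦ 1 := by
  obtain ⟨f, -, hf⟩ := exists_aeval_eq_allOnes hconn hreg hE
  rw [← hf, aeval_eq_sum_expansionCoeff_smul hE hp f]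
  refine Finset.sum_congr rfl fun j hj ↦ ?_
  have hj' : j ≤ d := Finset.mem_range_succ_iff.mp hj
  have htrace : tracePairing (G.adjMatrix ℝ) f (p j) =
      tracePairing (G.adjMatrix ℝ) (p j) (p j) := by
    rw [hnorm j hj', tracePairing_apply, Matrix.trace_mul_comm, hf,
      aeval_mul_of_mul_eq_smul (adjMatrix_mul_allOnes hreg)]
    simp [Matrix.trace, mul_comm]
  rw [expansionCoeff, htrace, div_self (hp.self_ne_zero j hj'), one_smul]

end RegularGraph

/-- The distance-`i` matrix of a graph. -/
noncomputable def distMatrix {V : Type*} (G : SimpleGraph V) (i : ℕ) : Matrix V V ℝ :=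
  of fun u v ↦ if G.dist u v = i then 1 else 0

section DistanceMatrices

variable {V : Type*} {G : SimpleGraph V} {i : ℕ} {u v : V}

lemma distMatrix_apply_of_eq (h : G.dist u v = i) : distMatrix G i u v = 1 := if_pos h

lemma distMatrix_apply_of_ne (h : G.dist u v ≠ i) : distMatrix G i u v = 0 := if_neg h

lemma sum_distMatrix_apply {d : ℕ} (h : G.dist u v ≤ d) :
    ∑ j ∈ range (d + 1), distMatrix G j u v = 1 := by
  rw [Finset.sum_eq_single_of_mem _ (Finset.mem_range_succ_iff.mpr h) fun j _ hj ↦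
    distMatrix_apply_of_ne hj.symm, distMatrix_apply_of_eq rfl]

lemma isSymm_distMatrix : (distMatrix G i).IsSymm := by
  ext u v
  simp only [distMatrix, Matrix.transpose_apply, Matrix.of_apply, G.dist_comm]

variable [Fintype V] [DecidableEq V]

lemma trace_mul_distMatrix (M : Matrix V V ℝ) :
    (M * distMatrix G i).trace = ∑ u, ∑ v ∈ sphere G u i, M u v := by
  refine Finset.sum_congr rfl fun u _ ↦ ?_
  rw [Matrix.diag_apply, Matrix.mul_apply, sphere, Finset.sum_filter]
  refine Finset.sum_congr rfl fun v _ ↦ ?_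
  rw [distMatrix, Matrix.of_apply, G.dist_comm, mul_ite, mul_one, mul_zero]

lemma eq_distMatrix_iff_trace_mul_self {P : Matrix V V ℝ} (hP : P.IsSymm)
    (hone : ∀ u v, G.dist u v = i → P u v = 1) :
    P = distMatrix G i ↔ (P * P).trace = ∑ u, (#(sphere G u i) : ℝ) := by
  have htrace {M : Matrix V V ℝ} (hM : ∀ u v, G.dist u v = i → M u v = 1) :
      (M * distMatrix G i).trace = ∑ u, (#(sphere G u i) : ℝ) := by
    rw [trace_mul_distMatrix]
    refine Finset.sum_congr rfl fun u _ ↦ ?_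
    have hone : ∀ v ∈ sphere G u i, M u v = 1 := fun v hv ↦ hM u v (Finset.mem_filter.mp hv).2
    rw [Finset.sum_congr rfl hone, Finset.sum_const, nsmul_one]
  have hsq : ((P - distMatrix G i) * (P - distMatrix G i)).trace =
      (P * P).trace - ∑ u, (#(sphere G u i) : ℝ) := by
    rw [sub_mul, mul_sub, mul_sub, Matrix.trace_sub, Matrix.trace_sub, Matrix.trace_sub,
      Matrix.trace_mul_comm (distMatrix G i) P, htrace hone,
      htrace fun _ _ ↦ distMatrix_apply_of_eq, sub_self, sub_zero]
  refine ⟨fun h ↦ h ▸ htrace fun _ _ ↦ distMatrix_apply_of_eq, fun h ↦ sub_eq_zero.mp ?_⟩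
  exact eq_zero_of_isSymm_of_trace_mul_self (hP.sub isSymm_distMatrix) (by rw [hsq, h, sub_self])

variable [DecidableRel G.Adj]

lemma distMatrix_mul_adjMatrix_apply (i : ℕ) (u v : V) :
    (distMatrix G i * G.adjMatrix ℝ) u v = #(sphere G u i ∩ G.neighborFinset v) := by
  rw [SimpleGraph.mul_adjMatrix_apply]
  simp only [distMatrix, Matrix.of_apply, Finset.sum_boole, sphere, Finset.filter_inter,
    Finset.univ_inter]

variable {d : ℕ} {lam : ℕ → ℝ} {E : ℕ → Matrix V V ℝ} {p : ℕ → ℝ[X]}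

lemma aeval_apply_eq_one_of_dist_eq (hdeg : ∀ j ≤ d, (p j).degree = j)
    (hJ : ∑ j ∈ range (d + 1), aeval (G.adjMatrix ℝ) (p j) = of fun _ _ ↦ 1) (hi : i ≤ d)
    (habove : ∀ j ≤ d, i < j → aeval (G.adjMatrix ℝ) (p j) = distMatrix G j)
    (huv : G.dist u v = i) : aeval (G.adjMatrix ℝ) (p i) u v = 1 := by
  have hJuv := congrFun₂ hJ u v
  rw [Matrix.sum_apply, Finset.sum_eq_single_of_mem i (Finset.mem_range_succ_iff.mpr hi)] at hJuv
  · exact hJuv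
  intro j hj hji
  have hj' : j ≤ d := Finset.mem_range_succ_iff.mp hj
  rcases hji.lt_or_gt with hlt | hgt
  · exact adjMatrix_aeval_apply_eq_zero (by rw [hdeg j hj', huv]; exact_mod_cast hlt)
  · rw [habove j hj' hgt, distMatrix_apply_of_ne (huv.trans_ne hji.symm)]

lemma aeval_eq_distMatrix_iff_average_card_sphere [Nonempty V] {c : ℝ}
    (hdeg : ∀ j ≤ d, (p j).degree = j)
    (hJ : ∑ j ∈ range (d + 1), aeval (G.adjMatrix ℝ) (p j) = of fun _ _ ↦ 1)
    (hnorm : tracePairing (G.adjMatrix ℝ) (p d) (p d) = Fintype.card V * c) :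
    aeval (G.adjMatrix ℝ) (p d) = distMatrix G d ↔
      1 / (Fintype.card V : ℝ) * ∑ u, (#(sphere G u d) : ℝ) = c := by
  rw [eq_distMatrix_iff_trace_mul_self (isSymm_aeval G.isSymm_adjMatrix _) fun u v huv ↦
      aeval_apply_eq_one_of_dist_eq hdeg hJ le_rfl (fun j hj hdj ↦ absurd hdj hj.not_gt) huv,
    ← tracePairing_apply, hnorm, one_div, eq_comm,
    inv_mul_eq_iff_eq_mul₀ (Nat.cast_ne_zero.mpr Fintype.card_ne_zero)]

lemma aeval_apply_eq_zero_of_dist_lt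
    (hE : IsSpectralResolution (G.adjMatrix ℝ) (range (d + 1)) lam E)
    (hp : IsOrthogonalSystem (tracePairing (G.adjMatrix ℝ)) d p) (hi : i < d)
    (habove : ∀ j ≤ d, i < j → aeval (G.adjMatrix ℝ) (p j) = distMatrix G j)
    (huv : G.dist u v < i) : aeval (G.adjMatrix ℝ) (p i) u v = 0 := by
  have hleft : aeval (G.adjMatrix ℝ) (p (i + 1) * X) u v = 0 := by
    rw [map_mul, aeval_X, habove (i + 1) hi i.lt_succ_self, SimpleGraph.mul_adjMatrix_apply]
    refine Finset.sum_eq_zero fun w hw ↦ distMatrix_apply_of_ne ?_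
    have := ((G.mem_neighborFinset v w).mp hw).diff_dist_adj (u := u)
    lia
  rw [aeval_eq_sum_expansionCoeff_smul hE hp, Matrix.sum_apply,
    Finset.sum_eq_single_of_mem i (Finset.mem_range_succ_iff.mpr hi.le), Matrix.smul_apply,
    smul_eq_mul] at hleft
  · exact (mul_eq_zero.mp hleft).resolve_left (expansionCoeff_succ_mul_X_ne_zero hp hi)
  intro j hj hji
  rcases hji.lt_or_gt with hlt | hgt
  · rw [expansionCoeff_mul_X_eq_zero hp hi (by lia), zero_smul, Matrix.zero_apply]
  · rw [Matrix.smul_apply, habove j (Finset.mem_range_succ_iff.mp hj) hgt,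
      distMatrix_apply_of_ne (huv.trans hgt).ne, smul_zero]

-- Downward induction on `i`: the recurrence for `p (i + 1) * X` determines `p i (A)`.
lemma aeval_eq_distMatrix (hE : IsSpectralResolution (G.adjMatrix ℝ) (range (d + 1)) lam E)
    (hp : IsOrthogonalSystem (tracePairing (G.adjMatrix ℝ)) d p)
    (hJ : ∑ j ∈ range (d + 1), aeval (G.adjMatrix ℝ) (p j) = of fun _ _ ↦ 1)
    (htop : aeval (G.adjMatrix ℝ) (p d) = distMatrix G d) {i : ℕ} (hi : i ≤ d) :
    aeval (G.adjMatrix ℝ) (p i) = distMatrix G i := by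
  rcases hi.eq_or_lt with rfl | hid
  · exact htop
  have habove : ∀ j ≤ d, i < j → aeval (G.adjMatrix ℝ) (p j) = distMatrix G j := fun j hj _ ↦
    aeval_eq_distMatrix hE hp hJ htop hj
  ext u v
  rcases lt_trichotomy (G.dist u v) i with hlt | heq | hgt
  · rw [aeval_apply_eq_zero_of_dist_lt hE hp hid habove hlt, distMatrix_apply_of_ne hlt.ne]
  · rw [aeval_apply_eq_one_of_dist_eq hp.degree_eq hJ hi habove heq, distMatrix_apply_of_eq heq]
  · rw [distMatrix_apply_of_ne hgt.ne', adjMatrix_aeval_apply_eq_zero]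
    rw [hp.degree_eq i hi]
    exact_mod_cast hgt
termination_by d - i

end DistanceMatrices

section IntersectionNumbers

lemma dist_mem_Icc_of_adj {V : Type*} {G : SimpleGraph V} (u : V) {v w : V} (h : G.Adj v w) :
    G.dist u w ∈ Icc (G.dist u v - 1) (G.dist u v + 1) := by
  have := h.diff_dist_adj (u := u)
  rw [Finset.mem_Icc]
  lia

variable {V : Type*} [Fintype V] [DecidableEq V] {G : SimpleGraph V}

lemma mem_sphere {u v : V} {i : ℕ} : v ∈ sphere G u i ↔ G.dist u v = i :=
  Finset.mem_filter_univ v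

variable [DecidableRel G.Adj]

lemma mem_sphere_inter_neighborFinset {u v w : V} {i : ℕ} :
    w ∈ sphere G u i ∩ G.neighborFinset v ↔ G.dist u w = i ∧ G.Adj v w := by
  rw [Finset.mem_inter, mem_sphere, SimpleGraph.mem_neighborFinset]

lemma sphere_inter_neighborFinset_eq_empty {u v : V} {i : ℕ}
    (hi : i ∉ Icc (G.dist u v - 1) (G.dist u v + 1)) :
    sphere G u i ∩ G.neighborFinset v = ∅ := by
  refine Finset.eq_empty_of_forall_notMem fun w hw ↦ ?_
  obtain ⟨rfl, hadj⟩ := mem_sphere_inter_neighborFinset.mp hw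
  exact hi (dist_mem_Icc_of_adj u hadj)

lemma sphere_inter_neighborFinset_nonempty (hconn : G.Connected) {u v : V} {j : ℕ}
    (h : G.dist u v = j + 1) : (sphere G u j ∩ G.neighborFinset v).Nonempty := by
  obtain ⟨w, hw⟩ := hconn.exists_walk_length_eq_dist v u
  rw [SimpleGraph.dist_comm, h] at hw
  cases w with
  | nil => simp at hw
  | @cons _ x _ hadj w =>
    have hstep := Finset.mem_Icc.mp (dist_mem_Icc_of_adj u hadj)
    have hle := G.dist_le w
    rw [SimpleGraph.dist_comm] at hle
    rw [SimpleGraph.Walk.length_cons] at hw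
    exact ⟨x, mem_sphere_inter_neighborFinset.mpr ⟨by lia, hadj⟩⟩

lemma sum_card_sphere_inter_neighborFinset (u v : V) :
    ∑ i ∈ Icc (G.dist u v - 1) (G.dist u v + 1), #(sphere G u i ∩ G.neighborFinset v) =
      G.degree v := by
  rw [← G.card_neighborFinset_eq_degree, Finset.card_eq_sum_card_fiberwise (f := G.dist u)
    fun w hw ↦ dist_mem_Icc_of_adj u ((G.mem_neighborFinset v w).mp hw)]
  refine Finset.sum_congr rfl fun i _ ↦ congrArg _ ?_
  ext w
  rw [mem_sphere_inter_neighborFinset, Finset.mem_filter, SimpleGraph.mem_neighborFinset, and_comm]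

/-- Seen from any vertex of `W`, a vertex at distance `m` has exactly `a i m` neighbours at
distance `i`. In the usual notation `a (m - 1) m`, `a m m` and `a (m + 1) m` are `c_m`, `a_m` and
`b_m`. -/
def HasIntersectionNumbers (G : SimpleGraph V) [DecidableRel G.Adj] (W : Finset V)
    (a : ℕ → ℕ → ℕ) : Prop :=
  ∀ u ∈ W, ∀ v i, #(sphere G u i ∩ G.neighborFinset v) = a i (G.dist u v)

variable {W : Finset V} {δ : ℕ}

lemma HasIntersectionNumbers.of_card_eq (hreg : G.IsRegularOfDegree δ) {b c : ℕ → ℕ}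
    (hW : ∀ u ∈ W, ∀ v,
      #(sphere G u (G.dist u v - 1) ∩ G.neighborFinset v) = c (G.dist u v) ∧
      #(sphere G u (G.dist u v + 1) ∩ G.neighborFinset v) = b (G.dist u v)) :
    HasIntersectionNumbers G W fun i m ↦
      if i = m - 1 then c m else if i = m + 1 then b m else if i = m then δ - (c m + b m)
      else 0 := by
  intro u hu v i
  obtain ⟨hc, hb⟩ := hW u hu v
  beta_reduce
  split_ifs with h₁ h₂ h₃
  · rw [h₁, hc]
  · rw [h₂, hb]
  · have hsum := sum_card_sphere_inter_neighborFinset (G := G) u v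
    have hIcc : Icc (G.dist u v - 1) (G.dist u v + 1) =
        {G.dist u v - 1, G.dist u v, G.dist u v + 1} := by
      ext k
      simp only [Finset.mem_Icc, Finset.mem_insert, Finset.mem_singleton]
      lia
    rw [hIcc, Finset.sum_insert (by simp; lia), Finset.sum_pair (by lia), hc, hb, ← h₃,
      hreg.degree_eq] at hsum
    rw [← h₃]
    lia
  · rw [sphere_inter_neighborFinset_eq_empty (by rw [Finset.mem_Icc]; lia), Finset.card_empty]

lemma isDistBiregularOn_iff (hreg : G.IsRegularOfDegree δ) {V1 V2 : Finset V} :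
    IsDistBiregularOn G V1 V2 ↔
      (∃ a, HasIntersectionNumbers G V1 a) ∧ ∃ a, HasIntersectionNumbers G V2 a := by
  constructor
  · rintro ⟨c₁, b₁, c₂, b₂, h₁, h₂⟩
    exact ⟨⟨_, .of_card_eq hreg h₁⟩, ⟨_, .of_card_eq hreg h₂⟩⟩
  · rintro ⟨⟨a₁, h₁⟩, ⟨a₂, h₂⟩⟩
    exact ⟨fun m ↦ a₁ (m - 1) m, fun m ↦ a₁ (m + 1) m, fun m ↦ a₂ (m - 1) m,
      fun m ↦ a₂ (m + 1) m, fun u hu v ↦ ⟨h₁ u hu v _, h₁ u hu v _⟩,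
      fun u hu v ↦ ⟨h₂ u hu v _, h₂ u hu v _⟩⟩

variable {d : ℕ} {lam : ℕ → ℝ} {E : ℕ → Matrix V V ℝ} {p : ℕ → ℝ[X]}

lemma distMatrix_mul_adjMatrix_eq_sum
    (hE : IsSpectralResolution (G.adjMatrix ℝ) (range (d + 1)) lam E)
    (hp : IsOrthogonalSystem (tracePairing (G.adjMatrix ℝ)) d p)
    (hA : ∀ i ≤ d, aeval (G.adjMatrix ℝ) (p i) = distMatrix G i) {i : ℕ} (hi : i ≤ d) :
    distMatrix G i * G.adjMatrix ℝ = ∑ j ∈ range (d + 1),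
      expansionCoeff (tracePairing (G.adjMatrix ℝ)) p (p i * X) j • distMatrix G j := by
  have hmul : distMatrix G i * G.adjMatrix ℝ = aeval (G.adjMatrix ℝ) (p i * X) := by
    rw [map_mul, aeval_X, hA i hi]
  rw [hmul, aeval_eq_sum_expansionCoeff_smul hE hp]
  exact Finset.sum_congr rfl fun j hj ↦ by rw [hA j (Finset.mem_range_succ_iff.mp hj)]

lemma exists_hasIntersectionNumbers
    (hE : IsSpectralResolution (G.adjMatrix ℝ) (range (d + 1)) lam E)
    (hp : IsOrthogonalSystem (tracePairing (G.adjMatrix ℝ)) d p) (hdist : ∀ u v, G.dist u v ≤ d)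
    (hA : ∀ i ≤ d, aeval (G.adjMatrix ℝ) (p i) = distMatrix G i) (W : Finset V) :
    ∃ a, HasIntersectionNumbers G W a := by
  refine ⟨fun i m ↦ if i ≤ d then ⌊expansionCoeff (tracePairing (G.adjMatrix ℝ)) p (p i * X) m⌋₊
    else 0, fun u _ v i ↦ ?_⟩
  beta_reduce
  split_ifs with hi
  · have hcard := distMatrix_mul_adjMatrix_apply (G := G) i u v
    rw [distMatrix_mul_adjMatrix_eq_sum hE hp hA hi, Matrix.sum_apply,
      Finset.sum_eq_single_of_mem (G.dist u v) (Finset.mem_range_succ_iff.mpr (hdist u v)),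
      Matrix.smul_apply, distMatrix_apply_of_eq rfl, smul_eq_mul, mul_one] at hcard
    · rw [hcard, Nat.floor_natCast]
    intro j _ hne
    rw [Matrix.smul_apply, distMatrix_apply_of_ne hne.symm, smul_zero]
  · rw [Finset.card_eq_zero, Finset.eq_empty_iff_forall_notMem]
    intro w hw
    exact hi ((mem_sphere_inter_neighborFinset.mp hw).1 ▸ hdist u w)

namespace HasIntersectionNumbers

variable {a : ℕ → ℕ → ℕ}

lemma distMatrix_succ_mul_adjMatrix_apply (hW : HasIntersectionNumbers G W a) {u : V}
    (hu : u ∈ W) (v : V) (j : ℕ) :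
    (distMatrix G (j + 1) * G.adjMatrix ℝ) u v = a (j + 1) (j + 2) * distMatrix G (j + 2) u v +
      a (j + 1) (j + 1) * distMatrix G (j + 1) u v + a (j + 1) j * distMatrix G j u v := by
  rw [distMatrix_mul_adjMatrix_apply]
  by_cases hj : G.dist u v ∈ Icc j (j + 2)
  · rw [hW u hu v]
    obtain h | h | h : G.dist u v = j ∨ G.dist u v = j + 1 ∨ G.dist u v = j + 2 := by
      rw [Finset.mem_Icc] at hj
      lia
    all_goals simp [distMatrix, h]
  · rw [Finset.mem_Icc] at hj
    rw [sphere_inter_neighborFinset_eq_empty (by rw [Finset.mem_Icc]; lia),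
      distMatrix_apply_of_ne (i := j + 2) (by lia), distMatrix_apply_of_ne (i := j + 1) (by lia),
      distMatrix_apply_of_ne (i := j) (by lia)]
    simp

lemma distMatrix_succ_apply_eq_zero (hW : HasIntersectionNumbers G W a) (hconn : G.Connected)
    {j : ℕ} (ha : a j (j + 1) = 0) {u : V} (hu : u ∈ W) (v : V) :
    distMatrix G (j + 1) u v = 0 := by
  refine distMatrix_apply_of_ne fun h ↦ ?_
  have hcard := hW u hu v j
  rw [h, ha, Finset.card_eq_zero] at hcard
  exact (sphere_inter_neighborFinset_nonempty hconn h).ne_empty hcard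

lemma exists_aeval_apply_eq_distMatrix (hW : HasIntersectionNumbers G W a)
    (hconn : G.Connected) (j : ℕ) :
    ∃ q : ℝ[X], q.degree ≤ j ∧
      ∀ u ∈ W, ∀ v, aeval (G.adjMatrix ℝ) q u v = distMatrix G j u v := by
  induction j using Nat.twoStepInduction with
  | zero =>
    refine ⟨1, degree_one_le, fun u _ v ↦ ?_⟩
    simp [Matrix.one_apply, distMatrix, hconn.dist_eq_zero_iff]
  | one =>
    refine ⟨X, degree_X_le, fun u _ v ↦ ?_⟩
    simp [SimpleGraph.adjMatrix_apply, distMatrix, SimpleGraph.dist_eq_one_iff_adj]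
  | more j ih₀ ih₁ =>
    obtain ⟨q₀, hq₀, hA₀⟩ := ih₀
    obtain ⟨q₁, hq₁, hA₁⟩ := ih₁
    rcases eq_or_ne (a (j + 1) (j + 2)) 0 with hc | hc
    · refine ⟨0, by simp, fun u hu v ↦ ?_⟩
      rw [hW.distMatrix_succ_apply_eq_zero hconn hc hu, map_zero, Matrix.zero_apply]
    refine ⟨(a (j + 1) (j + 2) : ℝ)⁻¹ •
      (q₁ * X - (a (j + 1) (j + 1) : ℝ) • q₁ - (a (j + 1) j : ℝ) • q₀), ?_, fun u hu v ↦ ?_⟩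
    · have hdeg {q : ℝ[X]} {i : ℕ} (hq : q.degree ≤ i) (hi : i ≤ j + 2) :
          q ∈ degreeLE ℝ ((j + 2 : ℕ) : WithBot ℕ) :=
        mem_degreeLE.mpr (hq.trans (by exact_mod_cast hi))
      have hq₁X : (q₁ * X).degree ≤ ((j + 2 : ℕ) : WithBot ℕ) := by
        rw [degree_mul_X]
        exact add_le_add_left hq₁ 1
      exact mem_degreeLE.mp <| Submodule.smul_mem _ _ <| Submodule.sub_mem _
        (Submodule.sub_mem _ (hdeg hq₁X le_rfl) (Submodule.smul_mem _ _ (hdeg hq₁ (by lia))))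
        (Submodule.smul_mem _ _ (hdeg hq₀ (by lia)))
    · have hmul : (aeval (G.adjMatrix ℝ) q₁ * G.adjMatrix ℝ) u v =
          (distMatrix G (j + 1) * G.adjMatrix ℝ) u v := by
        simp only [SimpleGraph.mul_adjMatrix_apply, hA₁ u hu]
      rw [hW.distMatrix_succ_mul_adjMatrix_apply hu] at hmul
      simp only [map_smul, map_sub, map_mul, aeval_X, Matrix.smul_apply, Matrix.sub_apply,
        smul_eq_mul, hmul, hA₀ u hu, hA₁ u hu]
      have hc' : (a (j + 1) (j + 2) : ℝ) ≠ 0 := Nat.cast_ne_zero.mpr hc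
      field_simp
      ring

lemma exists_aeval_add_apply_eq_distMatrix (hW : HasIntersectionNumbers G W a)
    (hconn : G.Connected) (hdeg : ∀ i ≤ d, (p i).degree = i)
    (hJ : ∑ j ∈ range (d + 1), aeval (G.adjMatrix ℝ) (p j) = of fun _ _ ↦ 1)
    (hdist : ∀ u v, G.dist u v ≤ d) :
    ∃ g : ℝ[X], g.degree < d ∧
      ∀ u ∈ W, ∀ v, aeval (G.adjMatrix ℝ) (g + p d) u v = distMatrix G d u v := by
  choose q hq hqA using hW.exists_aeval_apply_eq_distMatrix hconn
  refine ⟨∑ j ∈ range d, (p j - q j), mem_degreeLT.mp ?_, fun u hu v ↦ ?_⟩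
  · refine Submodule.sum_mem _ fun j hj ↦ Submodule.sub_mem _ ?_ ?_ <;> rw [mem_degreeLT]
    · rw [hdeg j (Finset.mem_range.mp hj).le]
      exact_mod_cast Finset.mem_range.mp hj
    · exact (hq j).trans_lt (by exact_mod_cast Finset.mem_range.mp hj)
  · have hball : ∑ j ∈ range d, aeval (G.adjMatrix ℝ) (q j) u v + distMatrix G d u v = 1 := by
      rw [Finset.sum_congr rfl fun j _ ↦ hqA j u hu v, ← Finset.sum_range_succ,
        sum_distMatrix_apply (hdist u v)]
    have hJuv := congrFun₂ hJ u v
    rw [Finset.sum_range_succ, Matrix.add_apply, Matrix.sum_apply, Matrix.of_apply] at hJuv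
    simp only [Finset.sum_sub_distrib, map_add, map_sub, map_sum, Matrix.add_apply,
      Matrix.sub_apply, Matrix.sum_apply]
    linarith

-- The error term `g` is orthogonal to `g + p d`, because `(g + p d)(A)` lives at distance `d` on
-- the rows of `W` and those rows see the whole trace; it is also orthogonal to `p d`.
lemma aeval_top_apply_eq_distMatrix (hW : HasIntersectionNumbers G W a) (hconn : G.Connected)
    (hp : IsOrthogonalSystem (tracePairing (G.adjMatrix ℝ)) d p)
    (hJ : ∑ j ∈ range (d + 1), aeval (G.adjMatrix ℝ) (p j) = of fun _ _ ↦ 1)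
    (hdist : ∀ u v, G.dist u v ≤ d) {κ : ℝ}
    (htrace : ∀ f : ℝ[X], (aeval (G.adjMatrix ℝ) f).trace =
      κ * ∑ u ∈ W, aeval (G.adjMatrix ℝ) f u u) {u : V} (hu : u ∈ W) (v : V) :
    aeval (G.adjMatrix ℝ) (p d) u v = distMatrix G d u v := by
  obtain ⟨g, hg, hgA⟩ :=
    hW.exists_aeval_add_apply_eq_distMatrix hconn hp.degree_eq hJ hdist
  have hortho : tracePairing (G.adjMatrix ℝ) (g + p d) g = 0 := by
    rw [tracePairing_apply, ← map_mul, htrace, Finset.sum_eq_zero, mul_zero]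
    intro x hx
    rw [map_mul, Matrix.mul_apply]
    refine Finset.sum_eq_zero fun y _ ↦ ?_
    rw [hgA x hx y]
    by_cases hxy : G.dist x y = d
    · rw [adjMatrix_aeval_apply_eq_zero (by rwa [SimpleGraph.dist_comm, hxy]), mul_zero]
    · rw [distMatrix_apply_of_ne hxy, zero_mul]
  rw [map_add, LinearMap.add_apply, hp.apply_eq_zero_of_degree_lt le_rfl hg, add_zero,
    tracePairing_apply] at hortho
  have hzero := eq_zero_of_isSymm_of_trace_mul_self (isSymm_aeval G.isSymm_adjMatrix g) hortho
  rw [← hgA u hu v, map_add, hzero, zero_add]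

end HasIntersectionNumbers

end IntersectionNumbers

section Bipartite

lemma trace_mul_mul_eq_zero_of_anticommute {n R : Type*} [Fintype n] [CommRing R]
    [NoZeroDivisors R] [CharZero R] {S A B : Matrix n n R} (hSA : S * A = -(A * S))
    (hAB : Commute A B) : (S * (A * B)).trace = 0 := by
  refine self_eq_neg.mp ?_
  calc (S * (A * B)).trace = -(A * (S * B)).trace := by
        rw [← mul_assoc, hSA, neg_mul, Matrix.trace_neg, mul_assoc]
    _ = -(S * (A * B)).trace := by rw [Matrix.trace_mul_comm, mul_assoc, hAB.eq]

lemma odd_card_of_forall_neg_mem {R : Type*} [Ring R] [NoZeroDivisors R] [CharZero R]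
    {s : Finset R} (hneg : ∀ x ∈ s, -x ∈ s) (h0 : 0 ∈ s) : Odd #s := by
  classical
  have hsum : ∑ _x ∈ s.erase 0, (1 : ZMod 2) = 0 :=
    Finset.sum_involution (fun x _ ↦ -x) (fun _ _ ↦ by decide)
      (fun x hx _ h ↦ Finset.ne_of_mem_erase hx (neg_eq_self.mp h))
      (fun x hx ↦ Finset.mem_erase.mpr
        ⟨neg_ne_zero.mpr (Finset.ne_of_mem_erase hx), hneg x (Finset.mem_of_mem_erase hx)⟩)
      (fun x _ ↦ neg_neg x)
  rw [Finset.sum_const, nsmul_one, ZMod.natCast_eq_zero_iff_even] at hsum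
  exact Finset.card_erase_add_one h0 ▸ hsum.add_one

variable {V : Type*} [DecidableEq V]

/-- The diagonal matrix with entry `1` at the vertices of `W` and `-1` elsewhere. It anticommutes
with the adjacency matrix when `W` is one side of a bipartition. -/
def sideSign (W : Finset V) : Matrix V V ℝ :=
  diagonal fun u ↦ if u ∈ W then 1 else -1

variable [Fintype V] {G : SimpleGraph V}

lemma isBipartiteWith_of_forall_not_adj {V1 V2 : Finset V} (hcover : V1 ∪ V2 = Finset.univ)
    (hdisj : Disjoint V1 V2) (hind1 : ∀ u ∈ V1, ∀ v ∈ V1, ¬ G.Adj u v)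
    (hind2 : ∀ u ∈ V2, ∀ v ∈ V2, ¬ G.Adj u v) : G.IsBipartiteWith (V1 : Set V) V2 where
  disjoint := Finset.disjoint_coe.mpr hdisj
  mem_of_adj u v hadj := by
    have hmem (w : V) : w ∈ V1 ∨ w ∈ V2 := Finset.mem_union.mp (hcover ▸ Finset.mem_univ w)
    rcases hmem u with hu | hu <;> rcases hmem v with hv | hv
    · exact absurd hadj (hind1 u hu v hv)
    · exact .inl ⟨hu, hv⟩
    · exact .inr ⟨hu, hv⟩
    · exact absurd hadj (hind2 u hu v hv)

lemma sideSign_mul_self (W : Finset V) : sideSign W * sideSign W = 1 := by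
  rw [sideSign, Matrix.diagonal_mul_diagonal, ← Matrix.diagonal_one]
  congr 1
  ext u
  split_ifs <;> norm_num

lemma trace_sideSign_mul (W : Finset V) (M : Matrix V V ℝ) :
    (sideSign W * M).trace = 2 * ∑ u ∈ W, M u u - M.trace := by
  rw [← Fintype.sum_ite_mem W fun u ↦ M u u, Finset.mul_sum, Matrix.trace, Matrix.trace,
    ← Finset.sum_sub_distrib]
  refine Finset.sum_congr rfl fun u _ ↦ ?_
  rw [Matrix.diag_apply, Matrix.diag_apply, sideSign, Matrix.diagonal_mul]
  split_ifs <;> ring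

variable [DecidableRel G.Adj] {W : Finset V}

lemma sideSign_mul_adjMatrix {U : Set V} (hbip : G.IsBipartiteWith W U) :
    sideSign W * G.adjMatrix ℝ = -(G.adjMatrix ℝ * sideSign W) := by
  ext u v
  rw [sideSign, Matrix.diagonal_mul, Matrix.neg_apply, Matrix.mul_diagonal,
    SimpleGraph.adjMatrix_apply]
  by_cases hadj : G.Adj u v
  · have hxor : u ∈ W ↔ v ∉ W := by
      have hdisj := Set.disjoint_left.mp hbip.disjoint
      rcases hbip.mem_of_adj hadj with ⟨hu, hv⟩ | ⟨hu, hv⟩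
      · exact iff_of_true hu fun h ↦ hdisj h hv
      · exact iff_of_false (fun h ↦ hdisj h hu) (not_not_intro hv)
    by_cases hv : v ∈ W <;> simp [hadj, hxor, hv]
  · simp [hadj]

lemma trace_aeval_eq_two_mul_sum {U : Set V} (hbip : G.IsBipartiteWith W U)
    (hcard : 2 * #W = Fintype.card V) (f : ℝ[X]) :
    (aeval (G.adjMatrix ℝ) f).trace = 2 * ∑ u ∈ W, aeval (G.adjMatrix ℝ) f u u := by
  have hbalanced : (sideSign W * 1).trace = 0 := by
    rw [trace_sideSign_mul, Matrix.trace_one, ← hcard]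
    simp
  have hcomm : Commute (G.adjMatrix ℝ) (aeval (G.adjMatrix ℝ) f.divX) := by
    simpa only [aeval_X] using (Commute.all X f.divX).map (aeval (G.adjMatrix ℝ))
  have htrace : (sideSign W * aeval (G.adjMatrix ℝ) f).trace = 0 := by
    rw [← X_mul_divX_add f, map_add, map_mul, aeval_X, aeval_C, mul_add, Matrix.trace_add,
      trace_mul_mul_eq_zero_of_anticommute (sideSign_mul_adjMatrix hbip) hcomm,
      Algebra.algebraMap_eq_smul_one, mul_smul_comm, Matrix.trace_smul, hbalanced, smul_zero,
      add_zero]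
  rw [trace_sideSign_mul] at htrace
  linarith

variable {ι : Type*} {s : Finset ι} {lam : ι → ℝ} {E : ι → Matrix V V ℝ}

lemma exists_eigenvalue_eq_neg {U : Set V} (hbip : G.IsBipartiteWith W U)
    (hE : IsSpectralResolution (G.adjMatrix ℝ) s lam E) {i : ι} (hi : i ∈ s) :
    ∃ j ∈ s, lam j = -lam i := by
  refine hE.exists_eq_of_mul_eq_smul (m := sideSign W * E i) (fun h ↦ hE.ne_zero i hi ?_) ?_
  · rw [← one_mul (E i), ← sideSign_mul_self W, mul_assoc, h, mul_zero]
  · rw [← mul_assoc, ← neg_eq_iff_eq_neg.mpr (sideSign_mul_adjMatrix hbip), neg_mul, mul_assoc,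
      hE.mul_eq_smul i hi, mul_smul_comm, neg_smul]

lemma eigenvalue_ne_zero_of_even_card {U : Set V} (hbip : G.IsBipartiteWith W U)
    (hE : IsSpectralResolution (G.adjMatrix ℝ) s lam E) (heven : Even #s) :
    ∀ i ∈ s, lam i ≠ 0 := by
  classical
  intro i hi h0
  have hodd : Odd #(s.image lam) := by
    refine odd_card_of_forall_neg_mem (fun x hx ↦ ?_) (Finset.mem_image.mpr ⟨i, hi, h0⟩)
    obtain ⟨j, hj, rfl⟩ := Finset.mem_image.mp hx
    exact Finset.mem_image.mpr (exists_eigenvalue_eq_neg hbip hE hj)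
  rw [Finset.card_image_of_injOn hE.injOn] at hodd
  exact Nat.not_odd_iff_even.mpr heven hodd

lemma two_mul_card_eq_of_even_card_eigenvalues {U : Set V} (hbip : G.IsBipartiteWith W U)
    (hE : IsSpectralResolution (G.adjMatrix ℝ) s lam E) (heven : Even #s) :
    2 * #W = Fintype.card V := by
  have hinv := hE.mul_sum_inv_smul (eigenvalue_ne_zero_of_even_card hbip hE heven)
  have htrace := trace_mul_mul_eq_zero_of_anticommute (sideSign_mul_adjMatrix hbip)
    (hinv.trans (mul_eq_one_comm.mp hinv).symm)
  rw [hinv, trace_sideSign_mul, Matrix.trace_one] at htrace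
  simp only [Matrix.one_apply_eq, Finset.sum_const, nsmul_one] at htrace
  exact_mod_cast sub_eq_zero.mp htrace

lemma isRegularOfDegree_of_card_eq {V1 V2 : Finset V} (hbip : G.IsBipartiteWith (V1 : Set V) V2)
    (hcover : V1 ∪ V2 = Finset.univ) {δ1 δ2 : ℕ} (hdeg1 : ∀ u ∈ V1, G.degree u = δ1)
    (hdeg2 : ∀ v ∈ V2, G.degree v = δ2) (hcard : #V1 = #V2) : G.IsRegularOfDegree δ1 := by
  have hsum := SimpleGraph.isBipartiteWith_sum_degrees_eq hbip
  rw [Finset.sum_const_nat hdeg1, Finset.sum_const_nat hdeg2, hcard] at hsum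
  intro v
  rcases Finset.mem_union.mp (hcover ▸ Finset.mem_univ v) with hv | hv
  · exact hdeg1 v hv
  · rw [hdeg2 v hv, Nat.eq_of_mul_eq_mul_left (Finset.card_pos.mpr ⟨v, hv⟩) hsum]

lemma isDistBiregularOn_iff_aeval_eq_distMatrix {V1 V2 : Finset V} {δ d : ℕ} {lam : ℕ → ℝ}
    {E : ℕ → Matrix V V ℝ} {p : ℕ → ℝ[X]} (hconn : G.Connected) (hreg : G.IsRegularOfDegree δ)
    (hbip : G.IsBipartiteWith (V1 : Set V) V2) (hcover : V1 ∪ V2 = Finset.univ)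
    (hcard1 : 2 * #V1 = Fintype.card V) (hcard2 : 2 * #V2 = Fintype.card V)
    (hE : IsSpectralResolution (G.adjMatrix ℝ) (range (d + 1)) lam E)
    (hp : IsOrthogonalSystem (tracePairing (G.adjMatrix ℝ)) d p)
    (hJ : ∑ j ∈ range (d + 1), aeval (G.adjMatrix ℝ) (p j) = of fun _ _ ↦ 1) :
    IsDistBiregularOn G V1 V2 ↔ aeval (G.adjMatrix ℝ) (p d) = distMatrix G d := by
  have hdist (u v : V) : G.dist u v ≤ d := by
    simpa only [card_range, Nat.lt_succ_iff] using dist_lt_card_eigenvalues hconn hreg hE u v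
  rw [isDistBiregularOn_iff hreg]
  constructor
  · rintro ⟨⟨a₁, h₁⟩, ⟨a₂, h₂⟩⟩
    ext u v
    rcases Finset.mem_union.mp (hcover ▸ Finset.mem_univ u) with hu | hu
    · exact h₁.aeval_top_apply_eq_distMatrix hconn hp hJ hdist
        (trace_aeval_eq_two_mul_sum hbip hcard1) hu v
    · exact h₂.aeval_top_apply_eq_distMatrix hconn hp hJ hdist
        (trace_aeval_eq_two_mul_sum hbip.symm hcard2) hu v
  · intro htop
    have hA (i : ℕ) (hi : i ≤ d) := aeval_eq_distMatrix hE hp hJ htop hi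
    exact ⟨exists_hasIntersectionNumbers hE hp hdist hA V1,
      exists_hasIntersectionNumbers hE hp hdist hA V2⟩

end Bipartite

/-- Theorem 3.1(a): a connected bipartite `(δ₁,δ₂)`-semiregular graph with `d+1`
distinct eigenvalues, where `d` is odd or `n₁ = n₂`, is distance-biregular if and only
if its average excess equals its spectral excess: `k̄_d = p_d(λ_0)`. -/
theorem stmt_11 {V : Type*} [Fintype V] [DecidableEq V]
    (G : SimpleGraph V) [DecidableRel G.Adj] (hconn : G.Connected)
    (V1 V2 : Finset V) (hcover : V1 ∪ V2 = Finset.univ) (hdisj : Disjoint V1 V2)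
    (hind1 : ∀ u ∈ V1, ∀ v ∈ V1, ¬ G.Adj u v)
    (hind2 : ∀ u ∈ V2, ∀ v ∈ V2, ¬ G.Adj u v)
    (δ1 δ2 : ℕ)
    (hdeg1 : ∀ u ∈ V1, G.degree u = δ1) (hdeg2 : ∀ v ∈ V2, G.degree v = δ2)
    (d : ℕ) (lam : ℕ → ℝ) (hlam : StrictAntiOn lam (Set.Iic d))
    (E : ℕ → Matrix V V ℝ)
    (hsym : ∀ i ≤ d, (E i).IsSymm)
    (hsum : ∑ i ∈ Finset.range (d + 1), E i = 1)
    (hmul : ∀ i ≤ d, ∀ j ≤ d, E i * E j = if i = j then E i else 0)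
    (heig : ∀ i ≤ d, G.adjMatrix ℝ * E i = lam i • E i)
    (hnz : ∀ i ≤ d, E i ≠ 0)
    -- the predistance polynomials, for the weights `m(λ_i)/n`
    (p : ℕ → Polynomial ℝ)
    (hpdeg : ∀ i ≤ d, (p i).degree = (i : WithBot ℕ))
    (hporth : ∀ i ≤ d, ∀ j ≤ d, i ≠ j →
      discInner (Finset.range (d + 1)) lam
        (fun i => Matrix.trace (E i) / (Fintype.card V : ℝ)) (p i) (p j) = 0)
    (hpnorm : ∀ i ≤ d,
      discInner (Finset.range (d + 1)) lam
          (fun i => Matrix.trace (E i) / (Fintype.card V : ℝ)) (p i) (p i)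
        = (p i).eval (lam 0))
    (hcase : Odd d ∨ V1.card = V2.card) :
    IsDistBiregularOn G V1 V2 ↔
      (1 / (Fintype.card V : ℝ)) * ∑ u : V, ((sphere G u d).card : ℝ)
        = (p d).eval (lam 0) := by
  have := hconn.nonempty
  have hV : (Fintype.card V : ℝ) ≠ 0 := Nat.cast_ne_zero.mpr Fintype.card_ne_zero
  have hE : IsSpectralResolution (G.adjMatrix ℝ) (range (d + 1)) lam E := by
    refine ⟨?_, hsum, ?_, ?_⟩ <;> simp only [Finset.coe_range, Finset.mem_range_succ_iff]
    exacts [Set.Iio_add_one_eq_Iic d ▸ hlam.injOn, heig, hnz]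
  simp only [discInner_eq_tracePairing_div hE, div_eq_zero_iff, hV, or_false] at hporth
  simp only [discInner_eq_tracePairing_div hE, div_eq_iff hV, mul_comm _ (Fintype.card V : ℝ)]
    at hpnorm
  have hp := isOrthogonalSystem_tracePairing G.isSymm_adjMatrix hE hpdeg hporth
  have hbip := isBipartiteWith_of_forall_not_adj hcover hdisj hind1 hind2
  have hcard_add : #V1 + #V2 = Fintype.card V := by
    rw [← card_union_of_disjoint hdisj, hcover, card_univ]
  have hcard1 : 2 * #V1 = Fintype.card V := by
    refine hcase.elim (fun hd ↦ two_mul_card_eq_of_even_card_eigenvalues hbip hE ?_) (by lia)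
    exact (card_range (d + 1)).symm ▸ hd.add_one
  have hreg := isRegularOfDegree_of_card_eq hbip hcover hdeg1 hdeg2 (by lia)
  have h0 : lam 0 = δ1 := eq_degree_of_isGreatest_eigenvalue hconn hreg hE
    (mem_range.mpr d.succ_pos) fun j hj ↦
      hlam.antitoneOn d.zero_le (mem_range_succ_iff.mp hj) j.zero_le
  have hJ := sum_aeval_eq_allOnes hconn hreg hE hp (h0 ▸ hpnorm)
  rw [isDistBiregularOn_iff_aeval_eq_distMatrix hconn hreg hbip hcover hcard1 (by lia) hE hp hJ,
    aeval_eq_distMatrix_iff_average_card_sphere hpdeg hJ (hpnorm d le_rfl)]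
end
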